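/- arXiv:0904.4429 — 6 statements merged into one kernel-verified Lean document; each statement's English description precedes it below -/
import Mathlib

section
/- Let R and B be disjoint finite sets of points in the plane with |R| = r and |B| = r + 2δ for some integer δ ≥ 0, with S = R ∪ B in general position, and suppose R and B can be separated by a straight line (i.e., there is a line with all points of R strictly on one side and all points of B strictly on the other). Then the number of balanced lines determined by S is exactly r. -/
/-!
The proof is a dual sweep in the style of the Lovász lemma on halving lines.

Take affine coordinates `(u, v)` in which the separating line is `u = 0`, with the blue points at
`u > 0` and the red ones at `u < 0`. A line spanned by a blue and a red point has an equation
`v = s + t * u`, and it passes through the point `x` iff `t = (v x - s) / u x`. So each point `x`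
becomes an affine function `s ↦ (v x - s) / u x`, which is decreasing for blue `x` and increasing
for red `x`. A blue-red pair spans a balanced line iff, at the place where the two graphs cross,
exactly `r + δ - 1` graphs of the whole family pass strictly below the crossing
(`balancedLine_iff`).

Sort the functions by their value at `s` and count the red ones among the lowest `r + δ`. For `s`
near `-∞` this count is `r`, and for `s` near `+∞` it is `0`. It changes only at a crossing between
positions `r + δ` and `r + δ + 1`; there a red-red or a blue-blue crossing has no effect, and a
blue-red crossing lowers it by exactly one because the red function is the increasing one
(`lowCount_jump`). Hence the count plus the number of balanced pairs already crossed is a locally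
constant function of `s ∈ ℝ`, thus constant, and comparing its two ends gives exactly `r` balanced
pairs (`card_balanced_of_affine`).
-/

open scoped Classical

/-- Orientation determinant of the points `q - p` and `x - p`:
positive iff `x` lies in the open half-plane to the left of the directed
line from `p` to `q`, negative iff to the right, zero iff collinear. -/
def cross (p q x : ℝ × ℝ) : ℝ :=
  (q.1 - p.1) * (x.2 - p.2) - (q.2 - p.2) * (x.1 - p.1)

/-- A finite point set is in general position if no three (distinct) of its
points are collinear. -/
def GenPos (S : Finset (ℝ × ℝ)) : Prop :=
  ∀ p ∈ S, ∀ q ∈ S, ∀ x ∈ S, p ≠ q → p ≠ x → q ≠ x → cross p q x ≠ 0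

/-- Weight (number of blue minus number of red points) of the open half-plane
`{x | cross p q x > 0}` bounded by the line through `p` and `q`. -/
noncomputable def wPos (B R : Finset (ℝ × ℝ)) (p q : ℝ × ℝ) : ℤ :=
  ((B.filter (fun x => 0 < cross p q x)).card : ℤ) -
    ((R.filter (fun x => 0 < cross p q x)).card : ℤ)

/-- Weight of the other open half-plane `{x | cross p q x < 0}`. -/
noncomputable def wNeg (B R : Finset (ℝ × ℝ)) (p q : ℝ × ℝ) : ℤ :=
  ((B.filter (fun x => cross p q x < 0)).card : ℤ) -
    ((R.filter (fun x => cross p q x < 0)).card : ℤ)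

/-- The line through `p` and `q` is balanced: both open half-planes it bounds
have weight `δ`. -/
def BalancedLine (B R : Finset (ℝ × ℝ)) (δ : ℤ) (p q : ℝ × ℝ) : Prop :=
  wPos B R p q = δ ∧ wNeg B R p q = δ

/-- The balanced lines determined by `S = R ∪ B`, represented by the
(blue, red) pair of points of `S` spanning them.  In general position every
line contains at most two points of `S`, so these pairs are in bijection with
the balanced lines. -/
noncomputable def balancedPairs (B R : Finset (ℝ × ℝ)) (δ : ℤ) :
    Finset ((ℝ × ℝ) × (ℝ × ℝ)) :=
  (B ×ˢ R).filter (fun pq => BalancedLine B R δ pq.1 pq.2)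

/-! ### Affine functions and their order just before and just after a parameter -/

/-- The value at `s` of the `i`-th affine function, with slope `m i` and constant term `c i`. -/
def lineVal {α : Type*} (m c : α → ℝ) (s : ℝ) (i : α) : ℝ := m i * s + c i

/-- Function `i` is strictly below function `j` immediately to the left of `s`. -/
def BelowLeft {α : Type*} (m c : α → ℝ) (s : ℝ) (i j : α) : Prop :=
  lineVal m c s i < lineVal m c s j ∨ (lineVal m c s i = lineVal m c s j ∧ m j < m i)

/-- Function `i` is strictly below function `j` immediately to the right of `s`. -/
def BelowRight {α : Type*} (m c : α → ℝ) (s : ℝ) (i j : α) : Prop :=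
  lineVal m c s i < lineVal m c s j ∨ (lineVal m c s i = lineVal m c s j ∧ m i < m j)

/-- The number of elements of `R` with fewer than `h` elements of `S` below them, where `rel j i`
means that `j` is below `i`. -/
noncomputable def lowCount {α : Type*} (S R : Finset α) (h : ℕ) (rel : α → α → Prop) : ℕ :=
  (R.filter (fun i => (S.filter (fun j => rel j i)).card < h)).card

open Filter Topology

lemma lowCount_congr {α : Type*} {S R : Finset α} (hRS : R ⊆ S) (h : ℕ) {rel rel' : α → α → Prop}
    (H : ∀ i ∈ S, ∀ j ∈ S, (rel i j ↔ rel' i j)) :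
    lowCount S R h rel = lowCount S R h rel' := by
  unfold lowCount
  congr 1
  apply Finset.filter_congr
  intro i hi
  rw [Finset.filter_congr (fun j hj => H j hj i (hRS hi))]

lemma lineVal_continuous {α : Type*} (m c : α → ℝ) (i : α) :
    Continuous (fun s => lineVal m c s i) := by
  unfold lineVal
  fun_prop

lemma lineVal_shift {α : Type*} (m c : α → ℝ) (s t : ℝ) (i : α) :
    lineVal m c t i = lineVal m c s i + m i * (t - s) := by
  unfold lineVal
  ring

/-- For a fixed pair, the left order at `t` agrees, for `t` near `s`, with the left order at `s`
if `t ≤ s` and with the right order at `s` if `t > s`. -/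
lemma belowLeft_eventually {α : Type*} (m c : α → ℝ) (s : ℝ) (i j : α) :
    ∀ᶠ t in 𝓝 s, (t ≤ s → (BelowLeft m c t i j ↔ BelowLeft m c s i j)) ∧
      (s < t → (BelowLeft m c t i j ↔ BelowRight m c s i j)) := by
  have hi := (lineVal_continuous m c i).tendsto s
  have hj := (lineVal_continuous m c j).tendsto s
  rcases lt_trichotomy (lineVal m c s i) (lineVal m c s j) with h | h | h
  · filter_upwards [hi.eventually_lt hj h] with t ht
    simp [BelowLeft, BelowRight, h, ht]
  · filter_upwards with t
    have ei := lineVal_shift m c s t i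
    have ej := lineVal_shift m c s t j
    constructor
    · intro hts
      rcases hts.eq_or_lt with rfl | hts
      · rfl
      · have key : BelowLeft m c t i j ↔ m j < m i := by
          unfold BelowLeft
          constructor
          · rintro (h1 | h1)
            · nlinarith
            · exact h1.2
          · intro h1
            left
            nlinarith
        rw [key]
        simp [BelowLeft, h]
    · intro hts
      have key : BelowLeft m c t i j ↔ m i < m j := by
        unfold BelowLeft
        constructor
        · rintro (h1 | h1)
          · nlinarith
          · nlinarith [h1.1, h1.2]
        · intro h1
          left
          nlinarith
      rw [key]
      simp [BelowRight, h]
  · filter_upwards [hj.eventually_lt hi h] with t ht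
    simp [BelowLeft, BelowRight, h.not_gt, h.ne', ht.not_gt, ht.ne']

/-! ### The change of the red count at a single parameter -/

/-- The sign of `m i - m j` if functions `i` and `j` meet at `s`, and `0` otherwise. -/
noncomputable def tieSign {α : Type*} (m c : α → ℝ) (s : ℝ) (i j : α) : ℤ :=
  if lineVal m c s j = lineVal m c s i then
    (if m j < m i then 1 else 0) - (if m i < m j then 1 else 0) else 0

lemma tieSign_antisymm {α : Type*} (m c : α → ℝ) (s : ℝ) (i j : α) :
    tieSign m c s i j = - tieSign m c s j i := by
  unfold tieSign
  by_cases h : lineVal m c s j = lineVal m c s i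
  · simp [h]
  · simp [h, Ne.symm h]

/-- Contribution of a single function `i`: it changes sides of the `h`-th position at `s` only if
exactly `h - 1` functions are strictly below it, and then the change is given by the crossing at
`s`, which involves at most one other function. -/
lemma low_indicator_jump {α : Type*} (S : Finset α) (m c : α → ℝ) (s : ℝ) (h : ℕ) (i : α)
    (huniq : ∀ j ∈ S, ∀ k ∈ S, j ≠ i → k ≠ i → lineVal m c s j = lineVal m c s i →
      lineVal m c s k = lineVal m c s i → j = k) :
    ((if (S.filter (fun j => BelowLeft m c s j i)).card < h then 1 else 0 : ℤ) -
      (if (S.filter (fun j => BelowRight m c s j i)).card < h then 1 else 0)) =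
    ∑ j ∈ S, (if (S.filter (fun x => lineVal m c s x < lineVal m c s i)).card + 1 = h
      then tieSign m c s i j else 0) := by
  set L := (S.filter (fun x => lineVal m c s x < lineVal m c s i)).card with hL
  set A := S.filter (fun j => lineVal m c s j = lineVal m c s i ∧ m i < m j) with hA
  set D := S.filter (fun j => lineVal m c s j = lineVal m c s i ∧ m j < m i) with hD
  have h1 : (S.filter (fun j => BelowLeft m c s j i)).card = L + A.card := by
    have e : S.filter (fun j => BelowLeft m c s j i) =
        S.filter (fun x => lineVal m c s x < lineVal m c s i) ∪ A := by
      ext x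
      simp only [hA, Finset.mem_union, Finset.mem_filter]
      unfold BelowLeft
      tauto
    rw [e, Finset.card_union_of_disjoint, hL]
    rw [hA, Finset.disjoint_filter]
    intro x _ hx hx'
    exact hx.ne hx'.1
  have h2 : (S.filter (fun j => BelowRight m c s j i)).card = L + D.card := by
    have e : S.filter (fun j => BelowRight m c s j i) =
        S.filter (fun x => lineVal m c s x < lineVal m c s i) ∪ D := by
      ext x
      simp only [hD, Finset.mem_union, Finset.mem_filter]
      unfold BelowRight
      tauto
    rw [e, Finset.card_union_of_disjoint, hL]
    rw [hD, Finset.disjoint_filter]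
    intro x _ hx hx'
    exact hx.ne hx'.1
  have h3 : A.card + D.card ≤ 1 := by
    rw [← Finset.card_union_of_disjoint, Finset.card_le_one]
    · intro x hx y hy
      have aux : ∀ z ∈ A ∪ D, z ∈ S ∧ z ≠ i ∧ lineVal m c s z = lineVal m c s i := by
        intro z hz
        simp only [hA, hD, Finset.mem_union, Finset.mem_filter] at hz
        rcases hz with ⟨h1, h2, h3⟩ | ⟨h1, h2, h3⟩
        · refine ⟨h1, ?_, h2⟩
          rintro rfl
          exact lt_irrefl _ h3
        · refine ⟨h1, ?_, h2⟩
          rintro rfl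
          exact lt_irrefl _ h3
      obtain ⟨a1, a2, a3⟩ := aux x hx
      obtain ⟨b1, b2, b3⟩ := aux y hy
      exact huniq x a1 y b1 a2 b2 a3 b3
    · rw [hA, hD, Finset.disjoint_filter]
      intro x _ hx hx'
      exact lt_asymm hx.2 hx'.2
  have h4 : ∑ j ∈ S, tieSign m c s i j = (D.card : ℤ) - A.card := by
    rw [hA, hD, Finset.card_filter, Finset.card_filter]
    push_cast
    rw [← Finset.sum_sub_distrib]
    apply Finset.sum_congr rfl
    intro j _
    unfold tieSign
    by_cases e : lineVal m c s j = lineVal m c s i <;> simp [e]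
  rw [h1, h2]
  by_cases hh : L + 1 = h
  · simp only [hh, if_true]
    rw [h4]
    split_ifs <;> omega
  · simp only [hh, if_false, Finset.sum_const_zero]
    split_ifs <;> omega

/-- Passing `s`, the red count drops by the number of balanced blue-red pairs crossing at `s`: the
red-red crossings cancel by antisymmetry. -/
lemma lowCount_jump {α : Type*} [DecidableEq α] (R B : Finset α) (m c : α → ℝ) (h : ℕ) (hdisj : Disjoint R B)
    (hmR : ∀ q ∈ R, 0 < m q) (hmB : ∀ p ∈ B, m p < 0) (s : ℝ)
    (h3 : ∀ i ∈ R ∪ B, ∀ j ∈ R ∪ B, ∀ k ∈ R ∪ B, j ≠ i → k ≠ i →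
      lineVal m c s j = lineVal m c s i → lineVal m c s k = lineVal m c s i → j = k)
    (Bal : α → α → Prop)
    (hBal : ∀ p ∈ B, ∀ q ∈ R, lineVal m c s p = lineVal m c s q → (Bal p q ↔
      ((R ∪ B).filter (fun x => lineVal m c s x < lineVal m c s q)).card + 1 = h)) :
    lowCount (R ∪ B) R h (BelowLeft m c s) = lowCount (R ∪ B) R h (BelowRight m c s) +
      ((B ×ˢ R).filter (fun pq => Bal pq.1 pq.2 ∧
        lineVal m c s pq.1 = lineVal m c s pq.2)).card := by
  zify
  rw [← sub_eq_iff_eq_add']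
  unfold lowCount
  rw [Finset.card_filter, Finset.card_filter, Finset.card_filter, Finset.sum_product_right]
  push_cast
  rw [← Finset.sum_sub_distrib, Finset.sum_congr rfl (fun i hi =>
    low_indicator_jump (R ∪ B) m c s h i (h3 i (Finset.mem_union_left _ hi)))]
  simp_rw [Finset.sum_union hdisj]
  rw [Finset.sum_add_distrib]
  have hz : ∑ i ∈ R, ∑ j ∈ R,
      (if ((R ∪ B).filter (fun x => lineVal m c s x < lineVal m c s i)).card + 1 = h
      then tieSign m c s i j else 0) = 0 := by
    -- the sum equals its own negative after exchanging the two summation variables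
    have hneg : ∑ i ∈ R, ∑ j ∈ R,
        (if ((R ∪ B).filter (fun x => lineVal m c s x < lineVal m c s i)).card + 1 = h
        then tieSign m c s i j else 0) = - ∑ i ∈ R, ∑ j ∈ R,
        (if ((R ∪ B).filter (fun x => lineVal m c s x < lineVal m c s i)).card + 1 = h
        then tieSign m c s i j else 0) := by
      conv_lhs => rw [Finset.sum_comm]
      rw [← Finset.sum_neg_distrib]
      apply Finset.sum_congr rfl
      intro i _
      rw [← Finset.sum_neg_distrib]
      apply Finset.sum_congr rfl
      intro j _
      by_cases e : lineVal m c s j = lineVal m c s i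
      · rw [e, tieSign_antisymm m c s j i]
        split_ifs <;> simp
      · simp [tieSign, e, Ne.symm e]
    linarith
  rw [hz, zero_add]
  apply Finset.sum_congr rfl
  intro q hq
  apply Finset.sum_congr rfl
  intro p hp
  have hlt : m p < m q := (hmB p hp).trans (hmR q hq)
  by_cases e : lineVal m c s p = lineVal m c s q
  · simp only [hBal p hp q hq e, e, and_true, tieSign, hlt, hlt.not_gt, if_true, if_false, sub_zero]
  · simp [tieSign, e]

/-! ### The sweep -/

/-- The counting statement for affine functions: red ones increasing, blue ones decreasing, no
three concurrent. The predicate `Bal` says, for a blue-red pair, that exactly `r + δ - 1` functions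
are strictly below their crossing. -/
theorem card_balanced_of_affine {α : Type*} [DecidableEq α] (r δ : ℕ) (R B : Finset α)
    (m c : α → ℝ)
    (hdisj : Disjoint R B) (hR : R.card = r) (hB : B.card = r + 2 * δ)
    (hmR : ∀ q ∈ R, 0 < m q) (hmB : ∀ p ∈ B, m p < 0)
    (h3 : ∀ s, ∀ i ∈ R ∪ B, ∀ j ∈ R ∪ B, ∀ k ∈ R ∪ B, j ≠ i → k ≠ i →
      lineVal m c s j = lineVal m c s i → lineVal m c s k = lineVal m c s i → j = k)
    (Bal : α → α → Prop)
    (hBal : ∀ s, ∀ p ∈ B, ∀ q ∈ R, lineVal m c s p = lineVal m c s q → (Bal p q ↔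
      ((R ∪ B).filter (fun x => lineVal m c s x < lineVal m c s q)).card + 1 = r + δ)) :
    ((B ×ˢ R).filter (fun pq => Bal pq.1 pq.2)).card = r := by
  -- red count plus number of balanced pairs that have crossed before `s`
  let G : ℝ → ℕ := fun s => lowCount (R ∪ B) R (r + δ) (BelowLeft m c s) +
    ((B ×ˢ R).filter (fun pq => Bal pq.1 pq.2 ∧ BelowLeft m c s pq.1 pq.2)).card
  have hpB : ∀ p ∈ B, p ∈ R ∪ B := fun p hp => Finset.mem_union_right _ hp
  have hqR : ∀ q ∈ R, q ∈ R ∪ B := fun q hq => Finset.mem_union_left _ hq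
  have hloc : IsLocallyConstant G := by
    rw [IsLocallyConstant.iff_eventually_eq]
    intro s
    have hev : ∀ᶠ t in 𝓝 s, ∀ i ∈ R ∪ B, ∀ j ∈ R ∪ B,
        (t ≤ s → (BelowLeft m c t i j ↔ BelowLeft m c s i j)) ∧
        (s < t → (BelowLeft m c t i j ↔ BelowRight m c s i j)) := by
      rw [Filter.eventually_all_finset]
      intro i _
      rw [Filter.eventually_all_finset]
      intro j _
      exact belowLeft_eventually m c s i j
    filter_upwards [hev] with t ht
    rcases le_or_gt t s with hts | hts
    · have e1 := lowCount_congr (R := R) Finset.subset_union_left (r + δ)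
        (fun i hi j hj => (ht i hi j hj).1 hts)
      have e2 : (B ×ˢ R).filter (fun pq => Bal pq.1 pq.2 ∧ BelowLeft m c t pq.1 pq.2) =
          (B ×ˢ R).filter (fun pq => Bal pq.1 pq.2 ∧ BelowLeft m c s pq.1 pq.2) := by
        apply Finset.filter_congr
        rintro ⟨p, q⟩ hpq
        rw [Finset.mem_product] at hpq
        rw [(ht p (hpB p hpq.1) q (hqR q hpq.2)).1 hts]
      simp only [G]
      rw [e1, e2]
    · have e1 := lowCount_congr (R := R) Finset.subset_union_left (r + δ)
        (fun i hi j hj => (ht i hi j hj).2 hts)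
      have e2 : ((B ×ˢ R).filter
          (fun pq => Bal pq.1 pq.2 ∧ BelowLeft m c t pq.1 pq.2)).card =
          ((B ×ˢ R).filter (fun pq => Bal pq.1 pq.2 ∧ BelowLeft m c s pq.1 pq.2)).card +
          ((B ×ˢ R).filter (fun pq => Bal pq.1 pq.2 ∧
            lineVal m c s pq.1 = lineVal m c s pq.2)).card := by
        rw [← Finset.card_union_of_disjoint, ← Finset.filter_or]
        · congr 1
          apply Finset.filter_congr
          rintro ⟨p, q⟩ hpq
          rw [Finset.mem_product] at hpq
          have hlt : m p < m q := (hmB p hpq.1).trans (hmR q hpq.2)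
          rw [(ht p (hpB p hpq.1) q (hqR q hpq.2)).2 hts]
          simp only [BelowLeft, BelowRight, hlt, hlt.not_gt, and_true, and_false, or_false]
          tauto
        · rw [Finset.disjoint_filter]
          rintro ⟨p, q⟩ hpq h1 h2
          rw [Finset.mem_product] at hpq
          have hlt : m p < m q := (hmB p hpq.1).trans (hmR q hpq.2)
          rcases h1.2 with h | h
          · exact h.ne h2.2
          · exact lt_asymm h.2 hlt
      have e3 := lowCount_jump R B m c (r + δ) hdisj hmR hmB s (h3 s) Bal (hBal s)
      simp only [G]
      rw [e1, e2, e3]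
      ring
  -- every blue-red difference is affine of positive slope, so its sign at both ends is known
  have htop : ∀ᶠ s in atTop, ∀ p ∈ B, ∀ q ∈ R, lineVal m c s p < lineVal m c s q := by
    rw [Filter.eventually_all_finset]
    intro p hp
    rw [Filter.eventually_all_finset]
    intro q hq
    have hlt : 0 < m q - m p := sub_pos.2 ((hmB p hp).trans (hmR q hq))
    filter_upwards [eventually_gt_atTop ((c p - c q) / (m q - m p))] with s hs
    rw [div_lt_iff₀ hlt] at hs
    unfold lineVal
    linarith
  have hbot : ∀ᶠ s in atBot, ∀ p ∈ B, ∀ q ∈ R, lineVal m c s q < lineVal m c s p := by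
    rw [Filter.eventually_all_finset]
    intro p hp
    rw [Filter.eventually_all_finset]
    intro q hq
    have hlt : 0 < m q - m p := sub_pos.2 ((hmB p hp).trans (hmR q hq))
    filter_upwards [eventually_lt_atBot ((c p - c q) / (m q - m p))] with s hs
    rw [lt_div_iff₀ hlt] at hs
    unfold lineVal
    linarith
  obtain ⟨s₁, hs₁⟩ := htop.exists
  obtain ⟨s₀, hs₀⟩ := hbot.exists
  have hG1 : G s₁ = ((B ×ˢ R).filter (fun pq => Bal pq.1 pq.2)).card := by
    have e1 : lowCount (R ∪ B) R (r + δ) (BelowLeft m c s₁) = 0 := by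
      unfold lowCount
      rw [Finset.card_eq_zero, Finset.filter_eq_empty_iff]
      intro q hq
      rw [not_lt]
      have hsub : B ⊆ (R ∪ B).filter (fun j => BelowLeft m c s₁ j q) := by
        intro p hp
        rw [Finset.mem_filter]
        exact ⟨hpB p hp, Or.inl (hs₁ p hp q hq)⟩
      have := Finset.card_le_card hsub
      omega
    have e2 : (B ×ˢ R).filter (fun pq => Bal pq.1 pq.2 ∧ BelowLeft m c s₁ pq.1 pq.2) =
        (B ×ˢ R).filter (fun pq => Bal pq.1 pq.2) := by
      apply Finset.filter_congr
      rintro ⟨p, q⟩ hpq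
      rw [Finset.mem_product] at hpq
      exact and_iff_left (Or.inl (hs₁ p hpq.1 q hpq.2))
    simp only [G]
    rw [e1, e2, zero_add]
  have hG0 : G s₀ = r := by
    have e1 : lowCount (R ∪ B) R (r + δ) (BelowLeft m c s₀) = r := by
      unfold lowCount
      rw [Finset.filter_true_of_mem, hR]
      intro q hq
      have hsub : (R ∪ B).filter (fun j => BelowLeft m c s₀ j q) ⊆ R.erase q := by
        intro x hx
        rw [Finset.mem_filter, Finset.mem_union] at hx
        rw [Finset.mem_erase]
        obtain ⟨hx | hx, hx'⟩ := hx
        · refine ⟨?_, hx⟩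
          rintro rfl
          rcases hx' with h | h
          · exact lt_irrefl _ h
          · exact lt_irrefl _ h.2
        · have := hs₀ x hx q hq
          rcases hx' with h | h
          · exact absurd h this.not_gt
          · exact absurd h.1 this.ne'
      have h1 := Finset.card_le_card hsub
      have h2 := Finset.card_erase_lt_of_mem hq
      omega
    have e2 : (B ×ˢ R).filter (fun pq => Bal pq.1 pq.2 ∧ BelowLeft m c s₀ pq.1 pq.2) = ∅ := by
      rw [Finset.filter_eq_empty_iff]
      rintro ⟨p, q⟩ hpq ⟨_, h⟩
      rw [Finset.mem_product] at hpq
      have := hs₀ p hpq.1 q hpq.2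
      rcases h with h | h
      · exact lt_asymm h this
      · exact this.ne' h.1
    simp only [G]
    rw [e1, e2, Finset.card_empty, add_zero]
  rw [← hG1, ← hG0]
  exact hloc.apply_eq_of_preconnectedSpace s₁ s₀

/-! ### From points to affine functions -/

/-- Write `u x = a * x.1 + b * x.2 - c` and `v x = a * x.2 - b * x.1` for the coordinates across and
along the separating line `u = 0`. If the points `p`, `q` lie on `v = s + t * u`, the
orientation determinant is proportional to the signed
height of `x` over that line. -/
lemma cross_of_line (a b c s t : ℝ) (p q x : ℝ × ℝ)
    (hp : a * p.2 - b * p.1 = s + t * (a * p.1 + b * p.2 - c))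
    (hq : a * q.2 - b * q.1 = s + t * (a * q.1 + b * q.2 - c)) :
    (a ^ 2 + b ^ 2) * cross p q x =
      ((a * q.1 + b * q.2 - c) - (a * p.1 + b * p.2 - c)) *
        ((a * x.2 - b * x.1) - s - t * (a * x.1 + b * x.2 - c)) := by
  have h1 : (a ^ 2 + b ^ 2) * cross p q x =
      ((a * q.1 + b * q.2 - c) - (a * p.1 + b * p.2 - c)) *
        ((a * x.2 - b * x.1) - (a * p.2 - b * p.1)) -
      ((a * q.2 - b * q.1) - (a * p.2 - b * p.1)) *
        ((a * x.1 + b * x.2 - c) - (a * p.1 + b * p.2 - c)) := by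
    unfold cross
    ring
  rw [h1, hp, hq]
  ring

/-- If the orientation determinant is positive exactly for the blue points with `g < t` and the red
points with `g > t`, negative for the opposite ones, and only `p` and `q` have `g = t`, then
balancedness is the count of points with `g < t`. -/
lemma balancedLine_iff (r δ : ℕ) (R B : Finset (ℝ × ℝ)) (hdisj : Disjoint R B)
    (hR : R.card = r) (hB : B.card = r + 2 * δ) (g : ℝ × ℝ → ℝ) (t : ℝ) (p q : ℝ × ℝ)
    (hp : p ∈ B) (hq : q ∈ R)
    (hgB : ∀ x ∈ B, (g x = t ↔ x = p)) (hgR : ∀ x ∈ R, (g x = t ↔ x = q))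
    (hBpos : ∀ x ∈ B, (0 < cross p q x ↔ g x < t)) (hBneg : ∀ x ∈ B, (cross p q x < 0 ↔ t < g x))
    (hRpos : ∀ x ∈ R, (0 < cross p q x ↔ t < g x)) (hRneg : ∀ x ∈ R, (cross p q x < 0 ↔ g x < t)) :
    BalancedLine B R δ p q ↔ ((R ∪ B).filter (fun x => g x < t)).card + 1 = r + δ := by
  have split : ∀ (X : Finset (ℝ × ℝ)) (y : ℝ × ℝ), y ∈ X → (∀ x ∈ X, (g x = t ↔ x = y)) →
      X.card = (X.filter (fun x => g x < t)).card + (X.filter (fun x => t < g x)).card + 1 := by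
    intro X y hy hX
    have e1 : (X.filter (fun x => g x = t)) = {y} := by
      ext x
      rw [Finset.mem_filter, Finset.mem_singleton]
      constructor
      · rintro ⟨h1, h2⟩
        exact (hX x h1).1 h2
      · rintro rfl
        exact ⟨hy, (hX x hy).2 rfl⟩
    have e2 : (X.filter (fun x => g x = t)).card = 1 := by rw [e1, Finset.card_singleton]
    rw [← e2, Finset.card_filter, Finset.card_filter, Finset.card_filter, Finset.card_eq_sum_ones,
      ← Finset.sum_add_distrib, ← Finset.sum_add_distrib]
    apply Finset.sum_congr rfl
    intro x _
    rcases lt_trichotomy (g x) t with h | h | h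
    · simp [h, h.not_gt, h.ne]
    · simp [h]
    · simp [h, h.not_gt, h.ne']
  have sB := split B p hp hgB
  have sR := split R q hq hgR
  unfold BalancedLine wPos wNeg
  rw [Finset.filter_congr hBpos, Finset.filter_congr hBneg, Finset.filter_congr hRpos,
    Finset.filter_congr hRneg, Finset.filter_union, Finset.card_union_of_disjoint
    (Finset.disjoint_filter_filter hdisj)]
  omega

/-- If moreover `R` and `B` can be strictly separated by a straight line, then
the number of balanced lines is exactly `r`. -/
theorem separated_exactly_r_balanced_lines (r δ : ℕ)
    (R B : Finset (ℝ × ℝ)) (hdisj : Disjoint R B)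
    (hR : R.card = r) (hB : B.card = r + 2 * δ)
    (hgp : GenPos (R ∪ B))
    (hsep : ∃ a b c : ℝ, (a, b) ≠ (0, 0) ∧
      (∀ p ∈ R, a * p.1 + b * p.2 < c) ∧ (∀ q ∈ B, c < a * q.1 + b * q.2)) :
    (balancedPairs B R (δ : ℤ)).card = r := by
  obtain ⟨a, b, c, hab, hsR, hsB⟩ := hsep
  have hN : 0 < a ^ 2 + b ^ 2 := by
    by_contra hcon
    apply hab
    have ha : a = 0 := by nlinarith [sq_nonneg a, sq_nonneg b]
    have hb : b = 0 := by nlinarith [sq_nonneg a, sq_nonneg b]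
    rw [ha, hb]
  -- coordinates across (`u`) and along (`v`) the separating line
  let u : ℝ × ℝ → ℝ := fun x => a * x.1 + b * x.2 - c
  let v : ℝ × ℝ → ℝ := fun x => a * x.2 - b * x.1
  have huR : ∀ x ∈ R, u x < 0 := fun x hx => sub_neg.2 (hsR x hx)
  have huB : ∀ x ∈ B, 0 < u x := fun x hx => sub_pos.2 (hsB x hx)
  have hu0 : ∀ x ∈ R ∪ B, u x ≠ 0 := by
    intro x hx
    rcases Finset.mem_union.1 hx with hx | hx
    · exact (huR x hx).ne
    · exact ne_of_gt (huB x hx)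
  -- the affine function of `x` is `s ↦ (v x - s) / u x`
  let m : ℝ × ℝ → ℝ := fun x => -(u x)⁻¹
  let d : ℝ × ℝ → ℝ := fun x => v x * (u x)⁻¹
  have hval : ∀ s, ∀ x ∈ R ∪ B, v x = s + lineVal m d s x * u x := by
    intro s x hx
    have := hu0 x hx
    simp only [lineVal, m, d]
    field_simp
    ring
  have h3 : ∀ s, ∀ i ∈ R ∪ B, ∀ j ∈ R ∪ B, ∀ k ∈ R ∪ B, j ≠ i → k ≠ i →
      lineVal m d s j = lineVal m d s i → lineVal m d s k = lineVal m d s i → j = k := by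
    intro s i hi j hj k hk hji hki ej ek
    by_contra hjk
    apply hgp i hi j hj k hk hji.symm hki.symm hjk
    have e1 := hval s i hi
    have e2 := hval s j hj
    have e3 := hval s k hk
    rw [ej] at e2
    rw [ek] at e3
    have key := cross_of_line a b c s _ i j k e1 e2
    have e4 : (a * k.2 - b * k.1) - s - lineVal m d s i * (a * k.1 + b * k.2 - c) = 0 := by
      simp only [u, v] at e3
      linarith
    rw [e4, mul_zero] at key
    exact (mul_eq_zero.1 key).resolve_left hN.ne'
  refine card_balanced_of_affine r δ R B m d hdisj hR hB ?_ ?_ h3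
    (fun p q => BalancedLine B R δ p q) ?_
  · intro q hq
    exact neg_pos.2 (inv_lt_zero.2 (huR q hq))
  · intro p hp
    exact neg_lt_zero.2 (inv_pos.2 (huB p hp))
  · intro s p hp q hq hpq
    have hpS : p ∈ R ∪ B := Finset.mem_union_right _ hp
    have hqS : q ∈ R ∪ B := Finset.mem_union_left _ hq
    have hne : p ≠ q := by
      rintro rfl
      exact Finset.disjoint_left.1 hdisj hq hp
    set t := lineVal m d s q with ht
    have hD : u q - u p < 0 := by linarith [huR q hq, huB p hp]
    have hcross : ∀ x ∈ R ∪ B, (a ^ 2 + b ^ 2) * cross p q x =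
        (u q - u p) * ((lineVal m d s x - t) * u x) := by
      intro x hx
      have e1 := hval s p hpS
      have e2 := hval s q hqS
      rw [hpq] at e1
      rw [cross_of_line a b c s t p q x e1 e2]
      have e3 := hval s x hx
      change (u q - u p) * (v x - s - t * u x) = _
      rw [e3]
      ring
    have hpos : ∀ x ∈ R ∪ B, (0 < cross p q x ↔ (lineVal m d s x - t) * u x < 0) := by
      intro x hx
      rw [← mul_pos_iff_of_pos_left hN, hcross x hx]
      exact ⟨fun h => by nlinarith, fun h => mul_pos_of_neg_of_neg hD h⟩
    have hneg : ∀ x ∈ R ∪ B, (cross p q x < 0 ↔ 0 < (lineVal m d s x - t) * u x) := by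
      intro x hx
      rw [← neg_pos, ← mul_pos_iff_of_pos_left hN, mul_neg, hcross x hx, neg_pos]
      exact ⟨fun h => by nlinarith, fun h => mul_neg_of_neg_of_pos hD h⟩
    apply balancedLine_iff r δ R B hdisj hR hB (lineVal m d s) t p q hp hq
    · intro x hx
      constructor
      · intro h
        by_contra hxp
        have hxq : x ≠ q := by
          rintro rfl
          exact Finset.disjoint_left.1 hdisj hq hx
        exact hxp (h3 s q hqS x (Finset.mem_union_right _ hx) p hpS hxq hne h hpq)
      · rintro rfl
        exact hpq
    · intro x hx
      constructor
      · intro h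
        by_contra hxq
        have hxp : x ≠ p := by
          rintro rfl
          exact Finset.disjoint_left.1 hdisj hx hp
        exact hxp (h3 s q hqS x (Finset.mem_union_left _ hx) p hpS hxq hne h hpq)
      · rintro rfl
        rfl
    · intro x hx
      rw [hpos x (Finset.mem_union_right _ hx)]
      have := huB x hx
      constructor <;> intro h <;> nlinarith
    · intro x hx
      rw [hneg x (Finset.mem_union_right _ hx), mul_pos_iff_of_pos_right (huB x hx), sub_pos]
    · intro x hx
      rw [hpos x (Finset.mem_union_left _ hx)]
      have := huR x hx
      constructor <;> intro h <;> nlinarith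
    · intro x hx
      rw [hneg x (Finset.mem_union_left _ hx)]
      have := huR x hx
      constructor <;> intro h <;> nlinarith
end

section
/- Let R and B be disjoint finite sets of points in the plane with |R| = |B| = n, with S = R ∪ B in general position, and suppose R and B can be separated by a straight line. Then the number of balanced lines determined by S is exactly n. -/
/-!
Choose affine coordinates `(u, v)` in which the separating line is `u = 0`, with the blue points in
`u > 0` and the red ones in `u < 0`. A line crossing `u = 0` is `v = s * u + t`; a point `p` lies
above it iff `t < height u v s p`, where `height u v s p = v p - s * u p`. The height of a blue
point is strictly decreasing in `s`, that of a red point strictly increasing. A line through a blue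
and a red point is balanced iff it has as many blue as red points above it; let `k < n` be this
number. The theorem follows because `k` determines the line and every `k < n` occurs.

* Existence (`exists_slope`): the `(k+1)`-st largest blue height is continuous in `s`, and so is the
  `(k+1)`-st largest red height (`exists_level`). For `s → -∞` all blue points are above all red
  ones, for `s → ∞` it is the other way round, so by the intermediate value theorem the two levels
  meet. General position makes the meeting line contain exactly one point of each colour, so there
  are exactly `k` points of either colour above it.
* Uniqueness (`slope_le`): the `(k+1)`-st blue level is strictly decreasing and the red one strictly
  increasing, so they meet only once.
-/

open scoped Classical

/-! ### Heights and levels -/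

/-- The intercept at `u = 0` of the line of slope `s` through `p`, in the coordinates `(u, v)`. -/
def height (u v : ℝ × ℝ → ℝ) (s : ℝ) (p : ℝ × ℝ) : ℝ := v p - s * u p

/-- The `(k+1)`-st largest value of a finite family of continuous functions is continuous: it is
the maximum over all `(k+1)`-element subfamilies of their minimum. -/
lemma exists_level {P : Type*} (F : Finset P) (k : ℕ) (hk : k < F.card) (f : P → ℝ → ℝ)
    (hf : ∀ p, Continuous (f p)) :
    ∃ g : ℝ → ℝ, Continuous g ∧ ∀ s, k < (F.filter (fun p => g s ≤ f p s)).card ∧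
      (F.filter (fun p => g s < f p s)).card ≤ k := by
  let m : Finset P → ℝ → ℝ := fun A s =>
    if h : A.Nonempty then A.inf' h (fun p => f p s) else 0
  have hm : ∀ A, Continuous (m A) := by
    intro A
    by_cases h : A.Nonempty
    · simp only [m, h, dif_pos]
      exact Continuous.finset_inf'_apply h fun p _ => hf p
    · simp only [m, h, dif_neg, not_false_eq_true]
      exact continuous_const
  have hne : (F.powersetCard (k + 1)).Nonempty := Finset.powersetCard_nonempty.2 hk
  refine ⟨fun s => (F.powersetCard (k + 1)).sup' hne (fun A => m A s),
    Continuous.finset_sup'_apply hne fun A _ => hm A, fun s => ⟨?_, ?_⟩⟩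
  · obtain ⟨A, hA, hAs⟩ := Finset.exists_mem_eq_sup' hne (fun A => m A s)
    rw [Finset.mem_powersetCard] at hA
    have hAne : A.Nonempty := Finset.card_pos.1 (by omega)
    have : A ⊆ F.filter (fun p => (F.powersetCard (k + 1)).sup' hne (fun A => m A s) ≤ f p s) := by
      intro p hp
      rw [Finset.mem_filter]
      refine ⟨hA.1 hp, ?_⟩
      rw [hAs]
      simp only [m, hAne, dif_pos]
      exact Finset.inf'_le _ hp
    have := Finset.card_le_card this
    simp only
    omega
  · by_contra! hlt
    obtain ⟨A, hA, hAc⟩ := Finset.exists_subset_card_eq (Nat.succ_le_of_lt hlt)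
    have hAne : A.Nonempty := Finset.card_pos.1 (by omega)
    have hAF : A ∈ F.powersetCard (k + 1) :=
      Finset.mem_powersetCard.2 ⟨hA.trans (Finset.filter_subset _ _), hAc⟩
    have h1 := Finset.le_sup' (fun A => m A s) hAF
    have h2 : (F.powersetCard (k + 1)).sup' hne (fun A => m A s) < m A s := by
      simp only [m, hAne, dif_pos]
      rw [Finset.lt_inf'_iff]
      exact fun p hp => (Finset.mem_filter.1 (hA hp)).2
    exact absurd h1 (not_le.2 h2)

/-- If the value `f p` is attained only at `p` on `F`, then it splits `F` into the elements above,
those below, and one more. -/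
lemma card_split {P : Type*} (F : Finset P) (f : P → ℝ) (p : P) (hp : p ∈ F)
    (huniq : ∀ q ∈ F, f q = f p → q = p) :
    (F.filter (fun x => f p ≤ f x)).card = (F.filter (fun x => f p < f x)).card + 1 ∧
    (F.filter (fun x => f x < f p)).card + (F.filter (fun x => f p < f x)).card + 1 = F.card := by
  have h1 : F.filter (fun x => f p ≤ f x) = insert p (F.filter (fun x => f p < f x)) := by
    ext x
    simp only [Finset.mem_filter, Finset.mem_insert]
    constructor
    · rintro ⟨hx, hle⟩
      rcases hle.eq_or_lt with h | h
      · exact Or.inl (huniq x hx h.symm)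
      · exact Or.inr ⟨hx, h⟩
    · rintro (rfl | ⟨hx, h⟩)
      · exact ⟨hp, le_rfl⟩
      · exact ⟨hx, h.le⟩
  have h2 : (F.filter (fun x => f p ≤ f x)).card = (F.filter (fun x => f p < f x)).card + 1 := by
    rw [h1, Finset.card_insert_of_notMem (by simp)]
  have h3 := Finset.card_filter_add_card_filter_not (s := F) (fun x => f x < f p)
  simp only [not_lt] at h3
  exact ⟨h2, by omega⟩

/-! ### The blue and red levels meet exactly once -/

/-- The `(k+1)`-st blue and red levels meet: blue heights decrease and red heights increase, from
all blue above all red to all red above all blue. -/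
lemma exists_slope (u v : ℝ × ℝ → ℝ) (R B : Finset (ℝ × ℝ))
    (hRu : ∀ p ∈ R, u p < 0) (hBu : ∀ p ∈ B, 0 < u p)
    (k : ℕ) (hkR : k < R.card) (hkB : k < B.card) :
    ∃ s t : ℝ,
      (k < (B.filter (fun x => t ≤ height u v s x)).card ∧
        (B.filter (fun x => t < height u v s x)).card ≤ k) ∧
      (k < (R.filter (fun x => t ≤ height u v s x)).card ∧
        (R.filter (fun x => t < height u v s x)).card ≤ k) := by
  have hc : ∀ p, Continuous (fun s => height u v s p) := by
    intro p; unfold height; fun_prop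
  obtain ⟨g, hg, hgB⟩ := exists_level B k hkB (fun p s => height u v s p) hc
  obtain ⟨r, hr, hrR⟩ := exists_level R k hkR (fun p s => height u v s p) hc
  have key : ∀ (F G : Finset (ℝ × ℝ)) (x y s : ℝ),
      k < (F.filter (fun p => x ≤ height u v s p)).card →
      (G.filter (fun p => y < height u v s p)).card ≤ k → k < G.card →
      (∀ p ∈ F, ∀ q ∈ G, height u v s p < height u v s q) → x ≤ y := by
    intro F G x y s hF hG hGk hlt
    obtain ⟨p, hp⟩ := Finset.card_pos.1 (Nat.zero_lt_of_lt hF)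
    rw [Finset.mem_filter] at hp
    by_contra! hyx
    have : G.filter (fun q => y < height u v s q) = G :=
      Finset.filter_true_of_mem fun q hq => hyx.trans (hp.2.trans_lt (hlt p hp.1 q hq))
    rw [this] at hG
    omega
  have htop : ∃ s, ∀ p ∈ B, ∀ q ∈ R, height u v s p < height u v s q := by
    have : ∀ᶠ s in Filter.atTop, ∀ p ∈ B, ∀ q ∈ R, height u v s p < height u v s q := by
      rw [Filter.eventually_all_finset]
      intro p hp
      rw [Filter.eventually_all_finset]
      intro q hq
      have hd : 0 < u p - u q := by linarith [hBu p hp, hRu q hq]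
      filter_upwards [Filter.eventually_gt_atTop ((v p - v q) / (u p - u q))] with s hs
      rw [div_lt_iff₀ hd] at hs
      unfold height
      linarith
    exact this.exists
  have hbot : ∃ s, ∀ q ∈ R, ∀ p ∈ B, height u v s q < height u v s p := by
    have : ∀ᶠ s in Filter.atBot, ∀ q ∈ R, ∀ p ∈ B, height u v s q < height u v s p := by
      rw [Filter.eventually_all_finset]
      intro q hq
      rw [Filter.eventually_all_finset]
      intro p hp
      have hd : 0 < u p - u q := by linarith [hBu p hp, hRu q hq]
      filter_upwards [Filter.eventually_lt_atBot ((v p - v q) / (u p - u q))] with s hs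
      rw [lt_div_iff₀ hd] at hs
      unfold height
      linarith
    exact this.exists
  obtain ⟨s₁, h₁⟩ := htop
  obtain ⟨s₂, h₂⟩ := hbot
  have e₁ : g s₁ ≤ r s₁ := key B R _ _ s₁ (hgB s₁).1 (hrR s₁).2 hkR h₁
  have e₂ : r s₂ ≤ g s₂ := key R B _ _ s₂ (hrR s₂).1 (hgB s₂).2 hkB h₂
  obtain ⟨s, hs⟩ := mem_range_of_exists_le_of_exists_ge (hg.sub hr) (c := 0)
    ⟨s₁, by simpa using e₁⟩ ⟨s₂, by simpa using e₂⟩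
  have hs' : r s = g s := by simp only [Pi.sub_apply] at hs; linarith
  have h4 := hrR s
  rw [hs'] at h4
  exact ⟨s, g s, hgB s, h4⟩

/-- Of two meeting points `(s, t)` and `(s', t')` of the `(k+1)`-st blue and red levels, the second
does not have the larger slope; by symmetry, the slopes are then equal. If `s < s'` and `t' ≤ t`, the
red level fails to rise strictly from `t` to `t'`; if `s < s'` and `t ≤ t'`, the blue level fails
to fall strictly. -/
lemma slope_le (u v : ℝ × ℝ → ℝ) (R B : Finset (ℝ × ℝ))
    (hRu : ∀ p ∈ R, u p < 0) (hBu : ∀ p ∈ B, 0 < u p)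
    (k : ℕ) (s t s' t' : ℝ)
    (hB : (B.filter (fun x => t < height u v s x)).card ≤ k)
    (hR : k < (R.filter (fun x => t ≤ height u v s x)).card)
    (hB' : k < (B.filter (fun x => t' ≤ height u v s' x)).card)
    (hR' : (R.filter (fun x => t' < height u v s' x)).card ≤ k) : s' ≤ s := by
  by_contra! hlt
  rcases le_total t' t with h | h
  · have : R.filter (fun x => t ≤ height u v s x) ⊆ R.filter (fun x => t' < height u v s' x) := by
      intro x hx
      rw [Finset.mem_filter] at hx ⊢
      refine ⟨hx.1, ?_⟩
      have h2 := hx.2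
      unfold height at h2 ⊢
      nlinarith [mul_pos (sub_pos.2 hlt) (neg_pos.2 (hRu x hx.1))]
    have := Finset.card_le_card this
    omega
  · have : B.filter (fun x => t' ≤ height u v s' x) ⊆ B.filter (fun x => t < height u v s x) := by
      intro x hx
      rw [Finset.mem_filter] at hx ⊢
      refine ⟨hx.1, ?_⟩
      have h2 := hx.2
      unfold height at h2 ⊢
      nlinarith [mul_pos (sub_pos.2 hlt) (hBu x hx.1)]
    have := Finset.card_le_card this
    omega

/-- Half of the uniqueness of the `(k+1)`-st largest value of `f` on `F`. -/
lemma level_le (F : Finset (ℝ × ℝ)) (f : ℝ × ℝ → ℝ) (k : ℕ) (t t' : ℝ)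
    (h : (F.filter (fun x => t < f x)).card ≤ k)
    (h' : k < (F.filter (fun x => t' ≤ f x)).card) : t' ≤ t := by
  by_contra! hlt
  have : F.filter (fun x => t' ≤ f x) ⊆ F.filter (fun x => t < f x) :=
    Finset.monotone_filter_right _ fun x _ hx => hlt.trans_le hx
  have := Finset.card_le_card this
  omega

/-! ### Counting balanced lines -/

/-- The theorem in coordinates `(u, v)` that are affine (`hcross`, where `D` is the determinant of
the coordinate change) and have `u = 0` as the separating line. -/
lemma card_balancedPairs_of_coords (n : ℕ) (u v : ℝ × ℝ → ℝ) (D : ℝ) (hD : 0 < D)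
    (hcross : ∀ p q x, D * cross p q x =
      (u q - u p) * (v x - v p) - (v q - v p) * (u x - u p))
    (R B : Finset (ℝ × ℝ)) (hR : R.card = n) (hB : B.card = n) (hgp : GenPos (R ∪ B))
    (hRu : ∀ p ∈ R, u p < 0) (hBu : ∀ p ∈ B, 0 < u p) :
    (balancedPairs B R 0).card = n := by
  have hne : ∀ b ∈ B, ∀ r ∈ R, b ≠ r := by
    rintro b hb r hr rfl
    exact lt_asymm (hRu b hr) (hBu b hb)
  have hX : ∀ s b r x, height u v s r = height u v s b →
      D * cross b r x = (u r - u b) * (height u v s x - height u v s b) := by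
    intro s b r x h
    rw [hcross]
    unfold height at h ⊢
    linear_combination (-(u x - u b)) * h
  -- A line through a blue and a red point contains no further point.
  have huniq : ∀ s, ∀ b ∈ B, ∀ r ∈ R, height u v s r = height u v s b → ∀ x ∈ R ∪ B,
      height u v s x = height u v s b → x = b ∨ x = r := by
    intro s b hb r hr h x hx hxb
    by_contra! hcon
    refine hgp b (Finset.mem_union_right _ hb) r (Finset.mem_union_left _ hr) x hx
      (hne b hb r hr) hcon.1.symm hcon.2.symm ?_
    have := hX s b r x h
    rw [hxb, sub_self, mul_zero] at this
    exact (mul_eq_zero.1 this).resolve_left hD.ne'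
  have huB : ∀ s, ∀ b ∈ B, ∀ r ∈ R, height u v s r = height u v s b → ∀ x ∈ B,
      height u v s x = height u v s b → x = b := fun s b hb r hr h x hx hxb =>
    (huniq s b hb r hr h x (Finset.mem_union_right _ hx) hxb).resolve_right (hne x hx r hr)
  have huR : ∀ s, ∀ b ∈ B, ∀ r ∈ R, height u v s r = height u v s b → ∀ x ∈ R,
      height u v s x = height u v s r → x = r := fun s b hb r hr h x hx hxb =>
    (huniq s b hb r hr h x (Finset.mem_union_left _ hx) (hxb.trans h)).resolve_left
      (hne b hb x hx).symm
  have hneg : ∀ s, ∀ b ∈ B, ∀ r ∈ R, height u v s r = height u v s b → ∀ x,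
      (cross b r x < 0 ↔ height u v s b < height u v s x) := by
    intro s b hb r hr h x
    have h1 := hX s b r x h
    have h2 : u r - u b < 0 := by linarith [hRu r hr, hBu b hb]
    rw [← sub_pos (b := height u v s b), ← smul_neg_iff_of_pos_left hD, smul_eq_mul, h1]
    constructor
    · intro h3
      by_contra! h4
      nlinarith
    · intro h3
      nlinarith
  have hpos : ∀ s, ∀ b ∈ B, ∀ r ∈ R, height u v s r = height u v s b → ∀ x,
      (0 < cross b r x ↔ height u v s x < height u v s b) := by
    intro s b hb r hr h x
    have h1 := hX s b r x h
    have h2 : u r - u b < 0 := by linarith [hRu r hr, hBu b hb]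
    rw [← sub_neg (b := height u v s b), ← mul_pos_iff_of_pos_left hD, h1]
    constructor
    · intro h3
      by_contra! h4
      nlinarith
    · intro h3
      nlinarith
  have hslope : ∀ b ∈ B, ∀ r ∈ R, ∃ s, height u v s r = height u v s b := by
    intro b hb r hr
    have h2 : u b - u r ≠ 0 := by linarith [hRu r hr, hBu b hb] |> ne_of_gt
    refine ⟨(v b - v r) / (u b - u r), ?_⟩
    unfold height
    field_simp
    ring
  have hbal : ∀ s, ∀ b ∈ B, ∀ r ∈ R, height u v s r = height u v s b →
      (BalancedLine B R 0 b r ↔ (B.filter (fun x => height u v s b < height u v s x)).card =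
        (R.filter (fun x => height u v s b < height u v s x)).card) := by
    intro s b hb r hr h
    have h1 := (card_split B (height u v s) b hb (huB s b hb r hr h)).2
    have h2 := (card_split R (height u v s) r hr (huR s b hb r hr h)).2
    rw [h] at h2
    simp only [BalancedLine, wPos, wNeg, hneg s b hb r hr h, hpos s b hb r hr h]
    omega
  rw [← Finset.card_range n]
  refine Finset.card_bij (fun pq _ => (B.filter (fun x => cross pq.1 pq.2 x < 0)).card) ?_ ?_ ?_
  · rintro ⟨b, r⟩ hpq
    simp only [balancedPairs, Finset.mem_filter, Finset.mem_product] at hpq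
    obtain ⟨⟨hb, hr⟩, -⟩ := hpq
    obtain ⟨s, h⟩ := hslope b hb r hr
    have h1 := (card_split B (height u v s) b hb (huB s b hb r hr h)).2
    simp only [hneg s b hb r hr h, Finset.mem_range]
    omega
  · rintro ⟨b, r⟩ hpq ⟨b', r'⟩ hpq' hk
    simp only [balancedPairs, Finset.mem_filter, Finset.mem_product] at hpq hpq'
    obtain ⟨⟨hb, hr⟩, hbl⟩ := hpq
    obtain ⟨⟨hb', hr'⟩, hbl'⟩ := hpq'
    obtain ⟨s, h⟩ := hslope b hb r hr
    obtain ⟨s', h'⟩ := hslope b' hb' r' hr'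
    rw [hbal s b hb r hr h] at hbl
    rw [hbal s' b' hb' r' hr' h'] at hbl'
    simp only [hneg s b hb r hr h, hneg s' b' hb' r' hr' h'] at hk
    have h1 := (card_split B (height u v s) b hb (huB s b hb r hr h)).1
    have h2 := (card_split R (height u v s) r hr (huR s b hb r hr h)).1
    have h1' := (card_split B (height u v s') b' hb' (huB s' b' hb' r' hr' h')).1
    have h2' := (card_split R (height u v s') r' hr' (huR s' b' hb' r' hr' h')).1
    rw [h] at h2
    rw [h'] at h2'
    have hs : s' = s := le_antisymm
      (slope_le u v R B hRu hBu _ s (height u v s b) s' (height u v s' b') hk.le (by omega) (by omega)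
        (by omega))
      (slope_le u v R B hRu hBu _ s' (height u v s' b') s (height u v s b) hk.ge (by omega) (by omega)
        (by omega))
    subst hs
    have ht : height u v s' b' = height u v s' b := le_antisymm
      (level_le B (height u v s') _ _ _ hk.le (by omega))
      (level_le B (height u v s') _ _ _ hk.ge (by omega))
    have hbb := huB s' b hb r hr h b' hb' ht
    have hrr := huR s' b hb r hr h r' hr' (by rw [h', ht, h])
    rw [hbb, hrr]
  · intro k hk
    rw [Finset.mem_range] at hk
    obtain ⟨s, t, ⟨hB1, hB2⟩, hR1, hR2⟩ :=
      exists_slope u v R B hRu hBu k (hR ▸ hk) (hB ▸ hk)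
    have hex : ∀ F : Finset (ℝ × ℝ), k < (F.filter (fun x => t ≤ height u v s x)).card →
        (F.filter (fun x => t < height u v s x)).card ≤ k → ∃ p ∈ F, height u v s p = t := by
      intro F h1 h2
      by_contra! hcon
      have : F.filter (fun x => t ≤ height u v s x) ⊆ F.filter (fun x => t < height u v s x) := by
        intro x hx
        rw [Finset.mem_filter] at hx ⊢
        exact ⟨hx.1, lt_of_le_of_ne hx.2 (hcon x hx.1).symm⟩
      have := Finset.card_le_card this
      omega
    obtain ⟨b, hb, rfl⟩ := hex B hB1 hB2
    obtain ⟨r, hr, h⟩ := hex R hR1 hR2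
    have h1 := (card_split B (height u v s) b hb (huB s b hb r hr h)).1
    have h2 := (card_split R (height u v s) r hr (huR s b hb r hr h)).1
    rw [h] at h2
    refine ⟨(b, r), ?_, ?_⟩
    · simp only [balancedPairs, Finset.mem_filter, Finset.mem_product]
      refine ⟨⟨hb, hr⟩, (hbal s b hb r hr h).2 (by omega)⟩
    · simp only [hneg s b hb r hr h]
      omega

/-- If `|R| = |B| = n`, `R ∪ B` is in general position and `R` and `B` can be
strictly separated by a straight line, then the number of balanced lines is
exactly `n`. -/
theorem separated_exactly_n_balanced_lines (n : ℕ)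
    (R B : Finset (ℝ × ℝ)) (hdisj : Disjoint R B)
    (hR : R.card = n) (hB : B.card = n)
    (hgp : GenPos (R ∪ B))
    (hsep : ∃ a b c : ℝ, (a, b) ≠ (0, 0) ∧
      (∀ p ∈ R, a * p.1 + b * p.2 < c) ∧ (∀ q ∈ B, c < a * q.1 + b * q.2)) :
    (balancedPairs B R 0).card = n := by
  obtain ⟨a, b, c, hab, hRs, hBs⟩ := hsep
  have hD : 0 < a ^ 2 + b ^ 2 := by
    rcases eq_or_ne a 0 with rfl | ha
    · have hb : b ≠ 0 := by
        rintro rfl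
        exact hab rfl
      positivity
    · positivity
  refine card_balancedPairs_of_coords n (fun p => a * p.1 + b * p.2 - c)
    (fun p => -b * p.1 + a * p.2) (a ^ 2 + b ^ 2) hD ?_ R B hR hB hgp ?_ ?_
  · intro p q x
    simp only [cross]
    ring
  · intro p hp
    linarith [hRs p hp]
  · intro p hp
    linarith [hBs p hp]
end

section
/- Let R and B be disjoint finite sets of points in the plane with |R| = r and |B| = r + 2δ for some integer δ ≥ 0, with S = R ∪ B in general position. If r is odd, then there exists a balanced line ℓ that is also a halving line of S, i.e., a balanced line such that each of the two open half-planes bounded by ℓ contains exactly (r + |B| − 2)/2 points of S. -/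
/-!
Write `r = 2k + 1`, so that `|B| = 2(k + δ) + 1`. A line through one blue and one red point is
balanced and halving exactly when each side of it contains `k` red and `k + δ` blue points, so the
theorem is the planar discrete ham-sandwich theorem for two sets of odd size.

For a direction `(cos θ, sin θ)`, project the points onto it. The median of the projections of an
odd set is a continuous function of `θ` (`exists_continuous_median`), and medians of odd sets are
unique (`IsMedian.unique`), so the median changes sign when `θ` is replaced by `θ + π`. The
intermediate value theorem then gives a `θ` at which the red and the blue median agree. The line
orthogonal to the direction at this common value contains a red and a blue point, and by general
position nothing else; hence the median inequalities on both sides are equalities.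
-/

open scoped Classical

/-- `m` is a median of the values of `v` on `A`, where `A` is meant to have `2 * k + 1` elements:
at most `k` values lie strictly on each side of `m`. -/
def IsMedian (A : Finset (ℝ × ℝ)) (k : ℕ) (v : ℝ × ℝ → ℝ) (m : ℝ) : Prop :=
  (A.filter (fun x => v x < m)).card ≤ k ∧ (A.filter (fun x => m < v x)).card ≤ k

lemma IsMedian.le {A : Finset (ℝ × ℝ)} {k : ℕ} (hA : A.card = 2 * k + 1) {v : ℝ × ℝ → ℝ}
    {m m' : ℝ} (h : IsMedian A k v m) (h' : IsMedian A k v m') : m' ≤ m := by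
  by_contra! hlt
  -- If `m < m'`, every value is above `m` or below `m'`, so `A` has at most `2 * k` elements.
  have hsub : A ⊆ A.filter (fun x => m < v x) ∪ A.filter (fun x => v x < m') := by
    intro x hx
    simp only [Finset.mem_union, Finset.mem_filter, hx, true_and]
    exact (lt_or_ge m (v x)).imp_right fun h => h.trans_lt hlt
  have h1 := Finset.card_le_card hsub
  have h2 := Finset.card_union_le (A.filter (fun x => m < v x)) (A.filter (fun x => v x < m'))
  have h3 := h.2
  have h4 := h'.1
  omega

lemma IsMedian.unique {A : Finset (ℝ × ℝ)} {k : ℕ} (hA : A.card = 2 * k + 1) {v : ℝ × ℝ → ℝ}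
    {m m' : ℝ} (h : IsMedian A k v m) (h' : IsMedian A k v m') : m = m' :=
  le_antisymm (h'.le hA h) (h.le hA h')

lemma IsMedian.neg {A : Finset (ℝ × ℝ)} {k : ℕ} {v : ℝ × ℝ → ℝ} {m : ℝ}
    (h : IsMedian A k v m) : IsMedian A k (fun x => -v x) (-m) := by
  simpa only [IsMedian, neg_lt_neg_iff] using And.symm h

/-- The median is the maximum over the `(k + 1)`-subsets `T` of `A` of the minimum of the values
on `T`, which is continuous in any parameter on which the values depend continuously. -/
lemma exists_continuous_median {A : Finset (ℝ × ℝ)} {k : ℕ} (hA : A.card = 2 * k + 1)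
    (v : ℝ → ℝ × ℝ → ℝ) (hv : ∀ x, Continuous fun θ => v θ x) :
    ∃ f : ℝ → ℝ, Continuous f ∧ ∀ θ, IsMedian A k (v θ) (f θ) := by
  have hP : (A.powersetCard (k + 1)).attach.Nonempty := by
    rw [Finset.attach_nonempty_iff, Finset.powersetCard_nonempty]
    omega
  have hT : ∀ T : {T // T ∈ A.powersetCard (k + 1)}, T.1.Nonempty := by
    intro T
    have := (Finset.mem_powersetCard.1 T.2).2
    exact Finset.card_pos.1 (by omega)
  refine ⟨fun θ => (A.powersetCard (k + 1)).attach.sup' hP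
    (fun T => T.1.inf' (hT T) (v θ)), ?_, fun θ => ⟨?_, ?_⟩⟩
  · exact Continuous.finset_sup'_apply hP
      (fun T _ => Continuous.finset_inf'_apply (hT T) (fun x _ => hv x))
  · obtain ⟨T, -, hmax⟩ := Finset.exists_mem_eq_sup' hP (fun T => T.1.inf' (hT T) (v θ))
    beta_reduce
    rw [hmax]
    obtain ⟨hTA, hTc⟩ := Finset.mem_powersetCard.1 T.2
    -- The values on an optimal `T` are at least the median; only `A \ T` can be below it.
    have hsub : A.filter (fun x => v θ x < T.1.inf' (hT T) (v θ)) ⊆ A \ T.1 := by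
      intro x hx
      rw [Finset.mem_filter] at hx
      exact Finset.mem_sdiff.2
        ⟨hx.1, fun hxT => absurd (Finset.inf'_le (v θ) hxT) (not_le.2 hx.2)⟩
    have h1 := Finset.card_le_card hsub
    have h2 := Finset.card_sdiff_add_card_eq_card hTA
    omega
  · by_contra! hlt
    -- Otherwise `k + 1` values lie above the maximum of the minima over `(k + 1)`-subsets.
    obtain ⟨T, hTs, hTc⟩ := Finset.exists_subset_card_eq (Nat.succ_le_of_lt hlt)
    have hTm : T ∈ A.powersetCard (k + 1) :=
      Finset.mem_powersetCard.2 ⟨hTs.trans (Finset.filter_subset _ _), hTc⟩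
    have hle := Finset.le_sup' (fun T : {T // T ∈ A.powersetCard (k + 1)} =>
      T.1.inf' (hT T) (v θ)) (Finset.mem_attach _ ⟨T, hTm⟩)
    refine absurd hle (not_le.2 ?_)
    rw [Finset.lt_inf'_iff]
    exact fun x hx => (Finset.mem_filter.1 (hTs hx)).2

lemma card_lt_add_card_eq_add_card_gt (A : Finset (ℝ × ℝ)) (v : ℝ × ℝ → ℝ) (m : ℝ) :
    (A.filter (fun x => v x < m)).card + (A.filter (fun x => v x = m)).card +
      (A.filter (fun x => m < v x)).card = A.card := by
  have h1 := Finset.card_filter_add_card_filter_not (s := A) (fun x => v x < m)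
  have h2 := Finset.card_filter_add_card_filter_not
    (s := A.filter (fun x => ¬ v x < m)) (fun x => v x = m)
  rw [Finset.filter_filter, Finset.filter_filter] at h2
  have e1 : A.filter (fun x => ¬ v x < m ∧ v x = m) = A.filter (fun x => v x = m) :=
    Finset.filter_congr fun x _ => ⟨fun h => h.2, fun h => ⟨h.not_lt, h⟩⟩
  have e2 : A.filter (fun x => ¬ v x < m ∧ ¬ v x = m) = A.filter (fun x => m < v x) :=
    Finset.filter_congr fun x _ =>
      ⟨fun h => lt_of_le_of_ne (not_lt.1 h.1) (Ne.symm h.2), fun h => ⟨h.not_gt, h.ne'⟩⟩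
  rw [e1, e2] at h2
  omega

lemma IsMedian.exists_eq {A : Finset (ℝ × ℝ)} {k : ℕ} (hA : A.card = 2 * k + 1)
    {v : ℝ × ℝ → ℝ} {m : ℝ} (h : IsMedian A k v m) : ∃ x ∈ A, v x = m := by
  have h0 := card_lt_add_card_eq_add_card_gt A v m
  obtain ⟨h1, h2⟩ := h
  obtain ⟨x, hx⟩ := Finset.card_pos.1
    (show 0 < (A.filter (fun x => v x = m)).card by omega)
  exact ⟨x, Finset.mem_filter.1 hx⟩

/-- If the median value is attained only once, exactly `k` values lie on each side of it. -/
lemma IsMedian.card_eq {A : Finset (ℝ × ℝ)} {k : ℕ} (hA : A.card = 2 * k + 1)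
    {v : ℝ × ℝ → ℝ} {m : ℝ} (h : IsMedian A k v m) {p : ℝ × ℝ}
    (hp : ∀ x ∈ A, v x = m → x = p) :
    (A.filter (fun x => v x < m)).card = k ∧ (A.filter (fun x => m < v x)).card = k := by
  have h0 := card_lt_add_card_eq_add_card_gt A v m
  have h3 : (A.filter (fun x => v x = m)).card ≤ 1 := by
    rw [Finset.card_le_one]
    intro a ha b hb
    rw [Finset.mem_filter] at ha hb
    rw [hp a ha.1 ha.2, hp b hb.1 hb.2]
  obtain ⟨h1, h2⟩ := h
  omega

/-- The planar ham-sandwich theorem for two odd finite sets: in some direction the medians of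
the projections agree. -/
lemma exists_common_median {R B : Finset (ℝ × ℝ)} {k l : ℕ} (hR : R.card = 2 * k + 1)
    (hB : B.card = 2 * l + 1) : ∃ θ m : ℝ,
      IsMedian R k (fun x => Real.cos θ * x.1 + Real.sin θ * x.2) m ∧
      IsMedian B l (fun x => Real.cos θ * x.1 + Real.sin θ * x.2) m := by
  have hv : ∀ x : ℝ × ℝ, Continuous fun θ => Real.cos θ * x.1 + Real.sin θ * x.2 := by
    intro x
    fun_prop
  obtain ⟨f, hf, hfm⟩ := exists_continuous_median hR _ hv
  obtain ⟨g, hg, hgm⟩ := exists_continuous_median hB _ hv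
  have hneg : (fun x : ℝ × ℝ => -(Real.cos 0 * x.1 + Real.sin 0 * x.2)) =
      fun x => Real.cos Real.pi * x.1 + Real.sin Real.pi * x.2 := by
    funext x
    simp
  have hfπ : f Real.pi = -f 0 := (hfm Real.pi).unique hR (hneg ▸ (hfm 0).neg)
  have hgπ : g Real.pi = -g 0 := (hgm Real.pi).unique hB (hneg ▸ (hgm 0).neg)
  have hzero : (0 : ℝ) ∈ Set.range (fun θ => f θ - g θ) := by
    apply mem_range_of_exists_le_of_exists_ge (hf.sub hg)
    · rcases le_total (f 0 - g 0) 0 with h | h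
      · exact ⟨0, h⟩
      · exact ⟨Real.pi, by rw [Pi.sub_apply, hfπ, hgπ]; linarith⟩
    · rcases le_total (f 0 - g 0) 0 with h | h
      · exact ⟨Real.pi, by rw [Pi.sub_apply, hfπ, hgπ]; linarith⟩
      · exact ⟨0, h⟩
  obtain ⟨θ, hθ⟩ := hzero
  exact ⟨θ, f θ, hfm θ, sub_eq_zero.1 hθ ▸ hgm θ⟩

/-- For points `p ≠ q` on the line with unit normal `(a, b)` and offset `m`, the orientation
determinant is a nonzero multiple of the signed distance to the line. -/
lemma exists_cross_eq {a b m : ℝ} (hab : a ^ 2 + b ^ 2 = 1) {p q : ℝ × ℝ} (hpq : p ≠ q)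
    (hp : a * p.1 + b * p.2 = m) (hq : a * q.1 + b * q.2 = m) :
    ∃ t : ℝ, t ≠ 0 ∧ ∀ x : ℝ × ℝ, cross p q x = t * (m - (a * x.1 + b * x.2)) := by
  have h1 : q.1 - p.1 = -(a * (q.2 - p.2) - b * (q.1 - p.1)) * b := by
    linear_combination (-(q.1 - p.1)) * hab + a * (hq - hp)
  have h2 : q.2 - p.2 = (a * (q.2 - p.2) - b * (q.1 - p.1)) * a := by
    linear_combination (-(q.2 - p.2)) * hab + b * (hq - hp)
  refine ⟨a * (q.2 - p.2) - b * (q.1 - p.1), fun ht => hpq ?_, fun x => ?_⟩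
  · rw [ht] at h1 h2
    exact Prod.ext (by linarith) (by linarith)
  · rw [cross]
    linear_combination (x.2 - p.2) * h1 - (x.1 - p.1) * h2 +
      (a * (q.2 - p.2) - b * (q.1 - p.1)) * hp

/-- Counts on the two sides of the level `m` of `v` are counts on the two sides of the line through
`p` and `q`; a negative factor `t` swaps the sides, which is harmless as both counts are `k`. -/
lemma card_cross {A : Finset (ℝ × ℝ)} {k : ℕ} {v : ℝ × ℝ → ℝ} {m t : ℝ} {p q : ℝ × ℝ}
    (ht : t ≠ 0) (hc : ∀ x, cross p q x = t * (m - v x))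
    (h : (A.filter (fun x => v x < m)).card = k ∧ (A.filter (fun x => m < v x)).card = k) :
    (A.filter (fun x => 0 < cross p q x)).card = k ∧
      (A.filter (fun x => cross p q x < 0)).card = k := by
  rcases lt_or_gt_of_ne ht with ht | ht
  · have e1 : ∀ x, 0 < cross p q x ↔ m < v x := fun x => by
      simp [hc, mul_pos_iff, ht, ht.not_gt]
    have e2 : ∀ x, cross p q x < 0 ↔ v x < m := fun x => by
      simp [hc, mul_neg_iff, ht, ht.not_gt]
    simpa only [e1, e2] using h.symm
  · have e1 : ∀ x, 0 < cross p q x ↔ v x < m := fun x => by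
      rw [hc, mul_pos_iff_of_pos_left ht, sub_pos]
    have e2 : ∀ x, cross p q x < 0 ↔ m < v x := fun x => by
      simp [hc, mul_neg_iff, ht, ht.not_gt]
    simpa only [e1, e2] using h

/-- If `r` is odd, there is a balanced line that is also a halving line of
`S = R ∪ B`: each of the two open half-planes it bounds contains exactly
`(r + |B| - 2) / 2` points of `S`. -/
theorem exists_balanced_halving_line (r δ : ℕ)
    (R B : Finset (ℝ × ℝ)) (hdisj : Disjoint R B)
    (hR : R.card = r) (hB : B.card = r + 2 * δ)
    (hgp : GenPos (R ∪ B)) (hodd : Odd r) :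
    ∃ p ∈ B, ∃ q ∈ R, BalancedLine B R (δ : ℤ) p q ∧
      (((R ∪ B).filter (fun x => 0 < cross p q x)).card = (r + B.card - 2) / 2) ∧
      (((R ∪ B).filter (fun x => cross p q x < 0)).card = (r + B.card - 2) / 2) := by
  obtain ⟨k, hk⟩ := hodd
  have hR' : R.card = 2 * k + 1 := by omega
  have hB' : B.card = 2 * (k + δ) + 1 := by omega
  obtain ⟨θ, m, hmR, hmB⟩ := exists_common_median hR' hB'
  obtain ⟨q, hqR, hq⟩ := hmR.exists_eq hR'
  obtain ⟨p, hpB, hp⟩ := hmB.exists_eq hB'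
  have hpq : p ≠ q := fun h => Finset.disjoint_left.1 hdisj hqR (h ▸ hpB)
  obtain ⟨t, ht, hc⟩ := exists_cross_eq (Real.cos_sq_add_sin_sq θ) hpq hp hq
  have hline : ∀ x ∈ R ∪ B, Real.cos θ * x.1 + Real.sin θ * x.2 = m → x = p ∨ x = q := by
    intro x hx hxm
    by_contra! hne
    refine hgp p (Finset.mem_union_right _ hpB) q (Finset.mem_union_left _ hqR) x hx hpq
      hne.1.symm hne.2.symm ?_
    rw [hc, hxm, sub_self, mul_zero]
  have hRo : ∀ x ∈ R, Real.cos θ * x.1 + Real.sin θ * x.2 = m → x = q := fun x hx hxm =>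
    (hline x (Finset.mem_union_left _ hx) hxm).resolve_left
      fun h => Finset.disjoint_left.1 hdisj hx (h ▸ hpB)
  have hBo : ∀ x ∈ B, Real.cos θ * x.1 + Real.sin θ * x.2 = m → x = p := fun x hx hxm =>
    (hline x (Finset.mem_union_right _ hx) hxm).resolve_right
      fun h => Finset.disjoint_left.1 hdisj hqR (h ▸ hx)
  obtain ⟨hR1, hR2⟩ := card_cross ht hc (hmR.card_eq hR' hRo)
  obtain ⟨hB1, hB2⟩ := card_cross ht hc (hmB.card_eq hB' hBo)
  refine ⟨p, hpB, q, hqR, ⟨?_, ?_⟩, ?_, ?_⟩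
  · rw [wPos, hR1, hB1]
    push_cast
    ring
  · rw [wNeg, hR2, hB2]
    push_cast
    ring
  · rw [Finset.filter_union, Finset.card_union_of_disjoint
      (Finset.disjoint_filter_filter hdisj), hR1, hB1]
    omega
  · rw [Finset.filter_union, Finset.card_union_of_disjoint
      (Finset.disjoint_filter_filter hdisj), hR2, hB2]
    omega
end

section
/- Let R and B be disjoint finite sets of points in the plane with |R| = r and |B| = b = r + 2δ for some integer δ ≥ 0, with S = R ∪ B in general position, and let 0 ≤ j ≤ ⌊r/2⌋. Let ℓ be a directed line passing through exactly one point of R whose open right half-plane contains exactly j points of R, and suppose the weight of the open right half-plane of ℓ is strictly greater than δ. Let m be the directed line parallel to ℓ (with the same direction) passing through exactly one point of B whose open right half-plane contains exactly j + δ points of B. Then the weight of the open right half-plane of m is at least δ. -/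
/-!
The right half-plane of `ℓ` has `j` red points and weight above `δ`, so it has more than `j + δ`
blue points. The right half-planes of the parallel lines `ℓ` and `m` are nested, and that of `m`
has only `j + δ` blue points, so it is the smaller one. Hence it has at most `j` red points, and
its weight is at least `(j + δ) - j = δ`.
-/

open scoped Classical

/-- `det2 d v` is the determinant of the vectors `d` and `v`; it is negative
iff `v` points to the right of the direction `d`. -/
def det2 (d v : ℝ × ℝ) : ℝ := d.1 * v.2 - d.2 * v.1

/-- `x` lies in the open right half-plane of the directed line through `p`
with direction `d`. -/
def RightSide (d p x : ℝ × ℝ) : Prop := det2 d (x - p) < 0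

/-- Weight (blue minus red count) of the open right half-plane of the
directed line through `p` with direction `d`. -/
noncomputable def weightRight (B R : Finset (ℝ × ℝ)) (d p : ℝ × ℝ) : ℤ :=
  ((B.filter (fun x => RightSide d p x)).card : ℤ) -
    ((R.filter (fun x => RightSide d p x)).card : ℤ)

/-- If a directed line `ℓ` through exactly one red point has exactly `j` red
points in its open right half-plane and this half-plane has weight `> δ`,
then the parallel directed line `m` through exactly one blue point with
exactly `j + δ` blue points in its open right half-plane has weight `≥ δ`
there. -/
theorem weight_blue_line_of_red_line (r δ j : ℕ)
    (R B : Finset (ℝ × ℝ)) (hdisj : Disjoint R B)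
    (hR : R.card = r) (hB : B.card = r + 2 * δ)
    (hgp : GenPos (R ∪ B)) (hj : j ≤ r / 2)
    (d : ℝ × ℝ) (hd : d ≠ 0)
    (p : ℝ × ℝ) (hp : p ∈ R)
    (hponly : ∀ x ∈ R, det2 d (x - p) = 0 → x = p)
    (hpj : (R.filter (fun x => RightSide d p x)).card = j)
    (hpw : (δ : ℤ) < weightRight B R d p)
    (q : ℝ × ℝ) (hq : q ∈ B)
    (hqonly : ∀ x ∈ B, det2 d (x - q) = 0 → x = q)
    (hqj : (B.filter (fun x => RightSide d q x)).card = j + δ) :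
    (δ : ℤ) ≤ weightRight B R d q := by
  -- If `q` were not to the right of `ℓ`, the right half-plane of `ℓ` would lie in that of `m`
  -- and so have at most `j + δ` blue points.
  have hqp : det2 d (q - p) < 0 := by
    by_contra! hqp
    have hsub : B.filter (fun x => RightSide d p x) ⊆ B.filter (fun x => RightSide d q x) := by
      refine Finset.monotone_filter_right B fun x _ hx => ?_
      simp only [RightSide, det2, Prod.fst_sub, Prod.snd_sub] at hx hqp ⊢
      linarith
    have hcard := Finset.card_le_card hsub
    unfold weightRight at hpw
    omega
  have hsub : R.filter (fun x => RightSide d q x) ⊆ R.filter (fun x => RightSide d p x) := by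
    refine Finset.monotone_filter_right R fun x _ hx => ?_
    simp only [RightSide, det2, Prod.fst_sub, Prod.snd_sub] at hx hqp ⊢
    linarith
  have hcard := Finset.card_le_card hsub
  unfold weightRight
  omega
end

section
/- Let R and B be disjoint finite sets of points in the plane with |R| = r and |B| = b = r + 2δ for some integer δ ≥ 0, with S = R ∪ B in general position, and let 0 ≤ j ≤ ⌊r/2⌋. Let m be a directed line passing through exactly one point of B whose open right half-plane contains exactly j + δ points of B, and suppose the weight of the open right half-plane of m is strictly less than δ. Let ℓ be the directed line parallel to m (with the same direction) passing through exactly one point of R whose open right half-plane contains exactly j points of R. Then the weight of the open right half-plane of ℓ is at most δ. -/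
/-!
All lines of direction `d` are linearly ordered by the value of `det2 d`, and their open right
half-planes are nested accordingly. Since the right half-plane of `m` has `j + δ` blue points and
weight less than `δ`, it has more than `j` red points, so `ℓ` lies to the right of `m`. Hence the
right half-plane of `ℓ` has at most `j + δ` blue points, and exactly `j` red ones.
-/

open scoped Classical

/-- If a directed line `m` through exactly one blue point has exactly `j + δ`
blue points in its open right half-plane and this half-plane has weight
`< δ`, then the parallel directed line `ℓ` through exactly one red point with
exactly `j` red points in its open right half-plane has weight `≤ δ`
there. -/
theorem weight_red_line_of_blue_line (r δ j : ℕ)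
    (R B : Finset (ℝ × ℝ)) (hdisj : Disjoint R B)
    (hR : R.card = r) (hB : B.card = r + 2 * δ)
    (hgp : GenPos (R ∪ B)) (hj : j ≤ r / 2)
    (d : ℝ × ℝ) (hd : d ≠ 0)
    (q : ℝ × ℝ) (hq : q ∈ B)
    (hqonly : ∀ x ∈ B, det2 d (x - q) = 0 → x = q)
    (hqj : (B.filter (fun x => RightSide d q x)).card = j + δ)
    (hqw : weightRight B R d q < (δ : ℤ))
    (p : ℝ × ℝ) (hp : p ∈ R)
    (hponly : ∀ x ∈ R, det2 d (x - p) = 0 → x = p)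
    (hpj : (R.filter (fun x => RightSide d p x)).card = j) :
    weightRight B R d p ≤ (δ : ℤ) := by
  have hdet : ∀ x y : ℝ × ℝ, det2 d (x - y) = det2 d x - det2 d y := by
    intro x y
    simp only [det2, Prod.fst_sub, Prod.snd_sub]
    ring
  -- If `a` does not lie to the left of `b`, the right half-plane at `a` is inside the one at `b`.
  have hmono : ∀ (S : Finset (ℝ × ℝ)) (a b : ℝ × ℝ), det2 d a ≤ det2 d b →
      (S.filter (fun x => RightSide d a x)).card ≤ (S.filter (fun x => RightSide d b x)).card := by
    intro S a b hab
    refine Finset.card_le_card (Finset.monotone_filter_right S fun x _ hx => ?_)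
    simp only [RightSide, hdet] at hx ⊢
    linarith
  unfold weightRight at hqw ⊢
  rcases le_total (det2 d q) (det2 d p) with h | h
  · -- Here `m` would have at most `j` red points on its right, against its weight being `< δ`.
    have := hmono R q p h
    omega
  · have := hmono B p q h
    omega
end

section
/- Let R and B be disjoint finite sets of points in the plane with |R| = r and |B| = r + 2δ for some integer δ ≥ 0, with S = R ∪ B in general position. Then the number of balanced lines determined by S is at least min(|R|, |B|) = r; in particular, since every balanced line passes through exactly one point of B and one point of R and distinct balanced lines use distinct red–blue pairs of points, S determines at least r distinct unordered pairs (p, q) with p ∈ B, q ∈ R such that the line through p and q is balanced. -/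
/-!
Rotate a direction through a half turn and record the orders in which the points are met: an allowable
sequence in which event `k` swaps two adjacent points, the final order being the reverse of the initial one
(`Sweep.exists_allowSeq`). Let `h k a` be the excess of blue over red among the first `a` points at slot `k`.
A line through a blue and a red point is balanced exactly if its swap happens with excess `δ` to its left; it
is to be shown that there are at least `r` such events.

Give site `j` the spin `M k j = true` if `h k (j - 1) + h k j > 2δ`, and put pads of spin `false` and `true`
at the two ends. A swap of points of equal colour leaves all spins alone, and so does an unbalanced swap of
different colours, while a balanced swap flips the two equal spins of the swapped pair. Consider the domain
walls, i.e. the gaps between different spins. A swap across a wall is always a swap of two points of the same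
colour: blue at a wall `false | true`, red at a wall `true | false`. A balanced swap moves a wall over the
swapped pair, or creates or annihilates two walls next to the pair.

Follow walls `false | true` forward in time, walls `true | false` backward, jump over the pair at a balanced
swap (with a change of direction at a creation or annihilation), and glue the last slot to the reflected first
one. This is a permutation of the finite set of walls (`SpinSys.step_nxt`, `SpinSys.Step.prv_eq`). The total
winding number of its cycles is the number of walls `false | true` minus that of walls `true | false` at
slot `0`, which is `1` because of the pads (`SpinSys.sum_wind`). Hence some cycle has odd winding number `m`
(`SpinSys.exists_walk`).

On returning to the start after `m` half turns, the cycle has left and right exchanged. If `m > 0`, look at the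
red points; moving forward in time the walk never meets a red-red swap,
and moving backward it undoes such swaps. The number of red points on the
left now but not initially, or conversely, starts at `0`; continued suitably to the other windings
(`SpinSys.Pot.U`) it ends at `r`, and it increases only at balanced swaps, by at most one each
(`SpinSys.Pot.U_step`). So the cycle passes at least `r` balanced swaps, and these are distinct since a balanced
swap carries a single strand of the walk (`SpinSys.isFlip_inj`). If `m < 0`, the same argument for the blue
points and the reversed walk gives at least `r + 2δ` balanced swaps (`SpinSys.flips_ge`).
-/

open scoped Classical

/-! ### Spin systems and the dynamics of walls -/

/-- A combinatorial record of a colour sweep over `n` points with `T` swap events. `M k j` is the spin of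
site `j` at slot `k` (sites `0` and `n + 1` are pads with fixed spins). Event `k` leads from slot `k` to
slot `k + 1` and swaps the points at positions `ev k`, `ev k + 1`; it changes spins only if `fl k`, and then
it flips the two equal spins at these positions. Slot `T` is slot `0` reversed and complemented. -/
structure SpinSys (n T : ℕ) where
  ev : ℕ → ℕ
  fl : ℕ → Prop
  M : ℕ → ℕ → Bool
  ev_pos : ∀ k < T, 1 ≤ ev k
  ev_lt : ∀ k < T, ev k + 1 ≤ n
  M_off : ∀ k < T, ∀ j, ¬ (fl k ∧ (j = ev k ∨ j = ev k + 1)) → M (k + 1) j = M k j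
  M_on : ∀ k < T, fl k → M (k + 1) (ev k) = !M k (ev k) ∧
    M (k + 1) (ev k + 1) = !M k (ev k + 1) ∧ M k (ev k) = M k (ev k + 1)
  M_rev : ∀ j ≤ n + 1, M T j = !M 0 (n + 1 - j)
  M_left : ∀ k ≤ T, M k 0 = false
  M_right : ∀ k ≤ T, M k (n + 1) = true

namespace SpinSys

variable {n T : ℕ} (Q : SpinSys n T)

/-- There is a domain wall in gap `a` (between sites `a` and `a + 1`) at slot `k`. -/
def Wall (k a : ℕ) : Prop := Q.M k a ≠ Q.M k (a + 1)

/-- The gap on the other side of the flipped pair of event `k`, if `k` flips and `a` is one of the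
two gaps bordering that pair; otherwise `a` itself. Walls bordering a flip hop from `a` to `opp k a`. -/
noncomputable def opp (k a : ℕ) : ℕ :=
  if Q.fl k ∧ a + 1 = Q.ev k then a + 2
  else if Q.fl k ∧ a = Q.ev k + 1 then a - 2 else a

lemma opp_le {k a : ℕ} (hk : k < T) (ha : a ≤ n) : Q.opp k a ≤ n := by
  have := Q.ev_lt k hk
  unfold opp; split_ifs <;> omega

lemma opp_opp {k a : ℕ} (hk : k < T) : Q.opp k (Q.opp k a) = a := by
  have := Q.ev_pos k hk
  unfold opp; grind

/-- A gap not bordering a flip keeps its wall, with its type, through the event. -/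
lemma opp_eq_self {k a : ℕ} (hk : k < T) (h : Q.opp k a = a)
    (hw : Q.Wall k a ∨ Q.Wall (k + 1) a) :
    Q.Wall k a ∧ Q.Wall (k + 1) a ∧ Q.M (k + 1) a = Q.M k a := by
  have h0 := Q.ev_pos k hk
  have h1 := Q.M_off k hk a
  have h2 := Q.M_off k hk (a + 1)
  have h3 := Q.M_on k hk
  unfold Wall at *
  unfold opp at h
  by_cases hf : Q.fl k
  · by_cases ha : a = Q.ev k
    · subst ha
      obtain ⟨x, y, z⟩ := h3 hf
      rw [x, y, z] at hw
      simp at hw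
    · have e1 : a ≠ Q.ev k + 1 := by grind
      have e2 : a + 1 ≠ Q.ev k := by grind
      rw [h1 (by grind), h2 (by grind)] at hw ⊢
      tauto
  · rw [h1 (by tauto), h2 (by tauto)] at hw ⊢
    tauto

/-- The spins around a flipping event, described from the gap `a` to the left, or to the right, of the
flipped pair. -/
lemma opp_ne_self {k a : ℕ} (hk : k < T) (h : Q.opp k a ≠ a) :
    (Q.M (k + 1) a = Q.M k a ∧ Q.M (k + 1) (a + 1) = (!Q.M k (a + 1)) ∧ a + 1 = Q.ev k ∧ Q.opp k a = a + 2 ∧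
      Q.M k (a + 1) = Q.M k (a + 2) ∧ Q.M (k + 1) (a + 2) = (!Q.M k (a + 2)) ∧
      Q.M (k + 1) (a + 3) = Q.M k (a + 3) ∧ Q.fl k) ∨
    (∃ c, a = c + 2 ∧ Q.M (k + 1) c = Q.M k c ∧ Q.M (k + 1) (c + 1) = (!Q.M k (c + 1)) ∧ c + 1 = Q.ev k ∧ Q.opp k a = c ∧
      Q.M k (c + 1) = Q.M k (c + 2) ∧ Q.M (k + 1) (c + 2) = (!Q.M k (c + 2)) ∧
      Q.M (k + 1) (c + 3) = Q.M k (c + 3) ∧ Q.fl k) := by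
  have h0 := Q.ev_pos k hk
  have h3 := Q.M_on k hk
  unfold opp at h ⊢
  split_ifs at h with e1 e2
  · left
    obtain ⟨x, y, z⟩ := h3 e1.1
    have h1 := Q.M_off k hk a (by omega)
    have h2 := Q.M_off k hk (a + 3) (by omega)
    rw [← e1.2] at x y z
    rw [if_pos e1]
    exact ⟨h1, x, e1.2, rfl, z, y, h2, e1.1⟩
  · right
    obtain ⟨x, y, z⟩ := h3 e2.1
    refine ⟨Q.ev k - 1, ?_⟩
    obtain ⟨c, hc⟩ : ∃ c, Q.ev k = c + 1 := ⟨Q.ev k - 1, by omega⟩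
    have h1 := Q.M_off k hk c (by omega)
    have h2 := Q.M_off k hk (c + 3) (by omega)
    rw [hc] at x y z
    rw [if_neg e1, if_pos e2, e2.2, hc]
    rw [Nat.add_sub_cancel]
    exact ⟨rfl, h1, x, rfl, by omega, z, y, h2, e2.1⟩
  · exact absurd rfl h

/-- Among the four places `(k, a)`, `(k, opp k a)`, `(k + 1, a)`, `(k + 1, opp k a)` around a flip exactly
two carry walls: the wall at `(k, a)` continues either to slot `k + 1` at the opposite gap, with the same
type, or turns around to the opposite gap at slot `k`, with the opposite type. -/
lemma strand_up {k a : ℕ} (hk : k < T) (h : Q.opp k a ≠ a) (hw : Q.Wall k a) :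
    ¬ Q.Wall (k + 1) a ∧
    ((Q.Wall (k + 1) (Q.opp k a) ∧ Q.M (k + 1) (Q.opp k a) = Q.M k a ∧ ¬ Q.Wall k (Q.opp k a)) ∨
     (Q.Wall k (Q.opp k a) ∧ Q.M k (Q.opp k a) = (!Q.M k a) ∧ ¬ Q.Wall (k + 1) (Q.opp k a))) := by
  unfold Wall at *
  rcases Q.opp_ne_self hk h with h | ⟨c, rfl, h⟩
  · obtain ⟨h1, h2, h3, h4, h5, h6, h7, h8⟩ := h
    simp only [h4, h1, h2, h6, h7, Nat.add_assoc, Nat.reduceAdd]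
    revert hw h5
    cases Q.M k a <;> cases Q.M k (a + 1) <;> cases Q.M k (a + 2) <;> cases Q.M k (a + 3) <;> simp
  · obtain ⟨h1, h2, h3, h4, h5, h6, h7, h8⟩ := h
    simp only [h4, h1, h2, h6, h7, Nat.add_assoc, Nat.reduceAdd]
    revert hw h5
    cases Q.M k c <;> cases Q.M k (c + 1) <;> cases Q.M k (c + 2) <;> cases Q.M k (c + 3) <;> simp

/-- Time reversal of `strand_up`. -/
lemma strand_down {k a : ℕ} (hk : k < T) (h : Q.opp k a ≠ a) (hw : Q.Wall (k + 1) a) :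
    ¬ Q.Wall k a ∧
    ((Q.Wall k (Q.opp k a) ∧ Q.M k (Q.opp k a) = Q.M (k + 1) a ∧ ¬ Q.Wall (k + 1) (Q.opp k a)) ∨
     (Q.Wall (k + 1) (Q.opp k a) ∧ Q.M (k + 1) (Q.opp k a) = (!Q.M (k + 1) a) ∧
      ¬ Q.Wall k (Q.opp k a))) := by
  unfold Wall at *
  rcases Q.opp_ne_self hk h with h | ⟨c, rfl, h⟩
  · obtain ⟨h1, h2, h3, h4, h5, h6, h7, h8⟩ := h
    simp only [h4, h1, h2, h6, h7, Nat.add_assoc, Nat.reduceAdd] at hw ⊢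
    revert hw h5
    cases Q.M k a <;> cases Q.M k (a + 1) <;> cases Q.M k (a + 2) <;> cases Q.M k (a + 3) <;> simp
  · obtain ⟨h1, h2, h3, h4, h5, h6, h7, h8⟩ := h
    simp only [h4, h1, h2, h6, h7, Nat.add_assoc, Nat.reduceAdd] at hw ⊢
    revert hw h5
    cases Q.M k c <;> cases Q.M k (c + 1) <;> cases Q.M k (c + 2) <;> cases Q.M k (c + 3) <;> simp

/-- Where a wall at slot `k`, gap `a` moves when followed forward in time; the seam glues slot `T` to
slot `0` with the gaps reflected. -/
noncomputable def up (k a : ℕ) : ℕ × ℕ :=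
  if k = T then (0, n - a)
  else if Q.Wall (k + 1) (Q.opp k a) then (k + 1, Q.opp k a) else (k, Q.opp k a)

/-- Where a wall at slot `k`, gap `a` moves when followed backward in time. -/
noncomputable def down (k a : ℕ) : ℕ × ℕ :=
  match k with
  | 0 => (T, n - a)
  | k + 1 => if Q.Wall k (Q.opp k a) then (k, Q.opp k a) else (k + 1, Q.opp k a)

/-- The successor of a wall: walls of type `false | true` are followed forward in time, walls of type
`true | false` backward. -/
noncomputable def nxt (w : ℕ × ℕ) : ℕ × ℕ :=
  if Q.M w.1 w.2 = false then Q.up w.1 w.2 else Q.down w.1 w.2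

/-- The inverse of `nxt` on walls. -/
noncomputable def prv (w : ℕ × ℕ) : ℕ × ℕ :=
  if Q.M w.1 w.2 = false then Q.down w.1 w.2 else Q.up w.1 w.2

/-- `w = (slot, gap)` lies in range and carries a wall. -/
def IsWall (w : ℕ × ℕ) : Prop := w.1 ≤ T ∧ w.2 ≤ n ∧ Q.Wall w.1 w.2

/-- The gluing of slot `T` to slot `0` by reflection preserves walls and their types. -/
lemma wall_rev {a : ℕ} (ha : a ≤ n) :
    (Q.Wall T a ↔ Q.Wall 0 (n - a)) ∧ (Q.Wall T a → Q.M T a = Q.M 0 (n - a)) := by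
  unfold Wall
  have h1 := Q.M_rev a (by omega)
  have h2 := Q.M_rev (a + 1) (by omega)
  rw [show n + 1 - a = n - a + 1 by omega] at h1
  rw [show n + 1 - (a + 1) = n - a by omega] at h2
  rw [h1, h2]
  cases Q.M 0 (n - a) <;> cases Q.M 0 (n - a + 1) <;> simp

variable {Q} in
lemma nxt_false {k a : ℕ} (h : Q.M k a = false) : Q.nxt (k, a) = Q.up k a := by simp [nxt, h]
variable {Q} in
lemma nxt_true {k a : ℕ} (h : Q.M k a = true) : Q.nxt (k, a) = Q.down k a := by simp [nxt, h]
variable {Q} in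
lemma prv_false {k a : ℕ} (h : Q.M k a = false) : Q.prv (k, a) = Q.down k a := by simp [prv, h]
variable {Q} in
lemma prv_true {k a : ℕ} (h : Q.M k a = true) : Q.prv (k, a) = Q.up k a := by simp [prv, h]
lemma up_top {a : ℕ} : Q.up T a = (0, n - a) := by simp [up]
lemma down_zero {a : ℕ} : Q.down 0 a = (T, n - a) := rfl
lemma up_lt {k a : ℕ} (hk : k < T) :
    Q.up k a = if Q.Wall (k + 1) (Q.opp k a) then (k + 1, Q.opp k a) else (k, Q.opp k a) := by
  simp [up, hk.ne]
lemma down_succ {k a : ℕ} :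
    Q.down (k + 1) a = if Q.Wall k (Q.opp k a) then (k, Q.opp k a) else (k + 1, Q.opp k a) := rfl

/-- The graph of `nxt` on walls, split by cases: crossing the seam, passing an event undisturbed, hopping
over a flipped pair while keeping the direction of time, and turning around at a flip. -/
inductive Step : ℕ × ℕ → ℕ × ℕ → Prop
  | seamUp {a : ℕ} (ha : a ≤ n) (h0 : Q.Wall T a) (h1 : Q.M T a = false)
      (h2 : Q.Wall 0 (n - a)) (h3 : Q.M 0 (n - a) = false) : Step (T, a) (0, n - a)
  | up {k a : ℕ} (hk : k < T) (ha : a ≤ n) (h : Q.opp k a = a) (h0 : Q.Wall k a)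
      (h1 : Q.M k a = false) (h2 : Q.Wall (k + 1) a) (h3 : Q.M (k + 1) a = false) :
      Step (k, a) (k + 1, a)
  | flipUp {k a : ℕ} (hk : k < T) (ha : a ≤ n) (h : Q.opp k a ≠ a) (h0 : Q.Wall k a)
      (h1 : Q.M k a = false) (h2 : Q.Wall (k + 1) (Q.opp k a))
      (h3 : Q.M (k + 1) (Q.opp k a) = false) : Step (k, a) (k + 1, Q.opp k a)
  | flipUpDown {k a : ℕ} (hk : k < T) (ha : a ≤ n) (h : Q.opp k a ≠ a) (h0 : Q.Wall k a)
      (h1 : Q.M k a = false) (h2 : Q.Wall k (Q.opp k a))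
      (h3 : Q.M k (Q.opp k a) = true) : Step (k, a) (k, Q.opp k a)
  | seamDown {a : ℕ} (ha : a ≤ n) (h0 : Q.Wall 0 a) (h1 : Q.M 0 a = true)
      (h2 : Q.Wall T (n - a)) (h3 : Q.M T (n - a) = true) : Step (0, a) (T, n - a)
  | down {k a : ℕ} (hk : k < T) (ha : a ≤ n) (h : Q.opp k a = a) (h0 : Q.Wall (k + 1) a)
      (h1 : Q.M (k + 1) a = true) (h2 : Q.Wall k a) (h3 : Q.M k a = true) :
      Step (k + 1, a) (k, a)
  | flipDown {k a : ℕ} (hk : k < T) (ha : a ≤ n) (h : Q.opp k a ≠ a) (h0 : Q.Wall (k + 1) a)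
      (h1 : Q.M (k + 1) a = true) (h2 : Q.Wall k (Q.opp k a))
      (h3 : Q.M k (Q.opp k a) = true) : Step (k + 1, a) (k, Q.opp k a)
  | flipDownUp {k a : ℕ} (hk : k < T) (ha : a ≤ n) (h : Q.opp k a ≠ a) (h0 : Q.Wall (k + 1) a)
      (h1 : Q.M (k + 1) a = true) (h2 : Q.Wall (k + 1) (Q.opp k a))
      (h3 : Q.M (k + 1) (Q.opp k a) = false) : Step (k + 1, a) (k + 1, Q.opp k a)

lemma step_nxt {w : ℕ × ℕ} (hw : Q.IsWall w) : Q.Step w (Q.nxt w) := by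
  obtain ⟨k, a⟩ := w
  obtain ⟨hk, ha, hw⟩ := hw
  simp only at hk ha hw
  cases hM : Q.M k a with
  | false =>
    rw [nxt_false hM]
    rcases hk.eq_or_lt with rfl | hk
    · obtain ⟨h1, h2⟩ := Q.wall_rev ha
      rw [up_top]
      exact .seamUp ha hw hM (h1.1 hw) (by rw [← h2 hw, hM])
    · rw [Q.up_lt hk]
      by_cases ho : Q.opp k a = a
      · obtain ⟨_, h2, h3⟩ := Q.opp_eq_self hk ho (Or.inl hw)
        rw [ho, if_pos h2]
        exact .up hk ha ho hw hM h2 (by rw [h3, hM])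
      · obtain ⟨h1, ⟨h2, h3, h4⟩ | ⟨h2, h3, h4⟩⟩ := Q.strand_up hk ho hw
        · rw [if_pos h2]
          exact .flipUp hk ha ho hw hM h2 (by rw [h3, hM])
        · rw [if_neg h4]
          exact .flipUpDown hk ha ho hw hM h2 (by rw [h3, hM]; rfl)
  | true =>
    rw [nxt_true hM]
    cases k with
    | zero =>
      obtain ⟨h1, h2⟩ := Q.wall_rev (a := n - a) (by omega)
      rw [show n - (n - a) = a by omega] at h1 h2
      rw [down_zero]
      exact .seamDown ha hw hM (h1.2 hw) (by rw [h2 (h1.2 hw), hM])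
    | succ k =>
      have hk : k < T := by omega
      rw [Q.down_succ]
      by_cases ho : Q.opp k a = a
      · obtain ⟨h2, _, h3⟩ := Q.opp_eq_self hk ho (Or.inr hw)
        rw [ho, if_pos h2]
        exact .down hk ha ho hw hM h2 (by rw [← h3, hM])
      · obtain ⟨h1, ⟨h2, h3, h4⟩ | ⟨h2, h3, h4⟩⟩ := Q.strand_down hk ho hw
        · rw [if_pos h2]
          exact .flipDown hk ha ho hw hM h2 (by rw [h3, hM])
        · rw [if_neg h4]
          exact .flipDownUp hk ha ho hw hM h2 (by rw [h3, hM]; rfl)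

lemma Step.isWall_right {w w' : ℕ × ℕ} (h : Q.Step w w') : Q.IsWall w' := by
  cases h with
  | seamUp ha h0 h1 h2 h3 => exact ⟨by simp, by simp, h2⟩
  | up hk ha h h0 h1 h2 h3 => exact ⟨hk, ha, h2⟩
  | flipUp hk ha h h0 h1 h2 h3 => exact ⟨hk, Q.opp_le hk ha, h2⟩
  | flipUpDown hk ha h h0 h1 h2 h3 => exact ⟨hk.le, Q.opp_le hk ha, h2⟩
  | seamDown ha h0 h1 h2 h3 => exact ⟨by simp, by simp, h2⟩
  | down hk ha h h0 h1 h2 h3 => exact ⟨hk.le, ha, h2⟩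
  | flipDown hk ha h h0 h1 h2 h3 => exact ⟨hk.le, Q.opp_le hk ha, h2⟩
  | flipDownUp hk ha h h0 h1 h2 h3 => exact ⟨hk, Q.opp_le hk ha, h2⟩

lemma Step.prv_eq {w w' : ℕ × ℕ} (h : Q.Step w w') : Q.prv w' = w := by
  cases h with
  | seamUp ha h0 h1 h2 h3 => rw [prv_false h3, down_zero, Nat.sub_sub_self ha]
  | up hk ha h h0 h1 h2 h3 => rw [prv_false h3, down_succ, h, if_pos h0]
  | flipUp hk ha h h0 h1 h2 h3 => rw [prv_false h3, down_succ, Q.opp_opp hk, if_pos h0]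
  | flipUpDown hk ha h h0 h1 h2 h3 =>
    rw [prv_true h3, Q.up_lt hk, Q.opp_opp hk, if_neg (Q.strand_up hk h h0).1]
  | seamDown ha h0 h1 h2 h3 => rw [prv_true h3, up_top, Nat.sub_sub_self ha]
  | down hk ha h h0 h1 h2 h3 => rw [prv_true h3, Q.up_lt hk, h, if_pos h0]
  | flipDown hk ha h h0 h1 h2 h3 => rw [prv_true h3, Q.up_lt hk, Q.opp_opp hk, if_pos h0]
  | flipDownUp hk ha h h0 h1 h2 h3 =>
    rw [prv_false h3, down_succ, Q.opp_opp hk, if_neg (Q.strand_down hk h h0).1]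

end SpinSys

/-! ### Winding, flips and the potential -/

namespace SpinSys

variable {n T : ℕ} (Q : SpinSys n T)

/-- The winding of the step that leaves `w`: `+1` if it crosses the seam forward, `-1` if backward. -/
noncomputable def wind (w : ℕ × ℕ) : ℤ :=
  (if w.1 = T ∧ Q.M w.1 w.2 = false then 1 else 0) -
    (if w.1 = 0 ∧ Q.M w.1 w.2 = true then 1 else 0)

/-- The event met by the step that leaves `w`. -/
def evIdx (w : ℕ × ℕ) : ℕ := if Q.M w.1 w.2 = false then w.1 else w.1 - 1

/-- The step that leaves `w` hops over a flipped pair. -/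
def IsFlip (w : ℕ × ℕ) : Prop :=
  (Q.M w.1 w.2 = false ∧ w.1 < T ∧ Q.opp w.1 w.2 ≠ w.2) ∨
  (Q.M w.1 w.2 = true ∧ 1 ≤ w.1 ∧ Q.opp (w.1 - 1) w.2 ≠ w.2)

/-- A flip step is determined by its event: of the two walls around a flip exactly one is the starting
point of the strand, and the spins next to the flipped pair tell which one. -/
lemma isFlip_spec {w : ℕ × ℕ} (hw : Q.IsWall w) (hf : Q.IsFlip w) :
    ∃ k c, k < T ∧ Q.fl k ∧ Q.evIdx w = k ∧ c + 1 = Q.ev k ∧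
     w = ((if Q.M k (c + 1) = true then (if Q.M k c = false then k else k + 1) else
        (if Q.M k (c + 3) = true then k else k + 1)),
        if Q.M k (c + 1) = true then c else c + 2) := by
  obtain ⟨k', a⟩ := w
  obtain ⟨hk, ha, hw⟩ := hw
  simp only [Wall] at hk ha hw
  rcases hf with ⟨hM, hk', ho⟩ | ⟨hM, hk', ho⟩
  · simp only at hM hk' ho
    refine ⟨k', Q.ev k' - 1, hk', ?_⟩
    simp only [evIdx, hM, if_true]
    rcases Q.opp_ne_self hk' ho with ⟨h1, h2, h3, h4, h5, h6, h7, h8⟩ | ⟨c, rfl, h1, h2, h3, h4, h5, h6, h7, h8⟩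
    · rw [← h3, Nat.add_sub_cancel]
      refine ⟨h8, trivial, rfl, ?_⟩
      rw [hM] at hw ⊢
      have : Q.M k' (a + 1) = true := by simpa using hw.symm
      simp [this]
    · rw [← h3, Nat.add_sub_cancel]
      refine ⟨h8, trivial, rfl, ?_⟩
      rw [hM] at hw
      have : Q.M k' (c + 3) = true := by simpa using hw.symm
      simp [this, h5, hM]
  · simp only at hM hk' ho
    obtain ⟨k, rfl⟩ : ∃ k, k' = k + 1 := ⟨k' - 1, by omega⟩
    rw [Nat.add_sub_cancel] at ho
    have hk'' : k < T := by omega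
    refine ⟨k, Q.ev k - 1, hk'', ?_⟩
    simp only [evIdx, hM]
    rcases Q.opp_ne_self hk'' ho with ⟨h1, h2, h3, h4, h5, h6, h7, h8⟩ | ⟨c, rfl, h1, h2, h3, h4, h5, h6, h7, h8⟩
    · rw [← h3, Nat.add_sub_cancel]
      refine ⟨h8, by simp, rfl, ?_⟩
      rw [hM, h2] at hw
      rw [hM] at h1
      have : Q.M k (a + 1) = true := by simpa using hw.symm
      simp [this, ← h1]
    · rw [← h3, Nat.add_sub_cancel]
      refine ⟨h8, by simp, rfl, ?_⟩
      rw [hM, h7] at hw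
      rw [hM] at h6
      have h9 : Q.M k (c + 3) = false := by simpa using hw.symm
      have : Q.M k (c + 2) = false := by simpa using h6.symm
      simp [h5, this, h9]

lemma isFlip_inj {w w' : ℕ × ℕ} (hw : Q.IsWall w) (hf : Q.IsFlip w) (hw' : Q.IsWall w')
    (hf' : Q.IsFlip w') (he : Q.evIdx w = Q.evIdx w') : w = w' := by
  obtain ⟨k, c, h1, h2, h3, h4, h5⟩ := Q.isFlip_spec hw hf
  obtain ⟨k', c', h1', h2', h3', h4', hsnd⟩ := Q.isFlip_spec hw' hf'
  obtain rfl : k = k' := by omega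
  obtain rfl : c = c' := by omega
  exact hsnd.symm ▸ h5

/-- The data for the potential of a walk along walls that starts in gap `a0` of slot `0`. For a colour
class `Y` of `y` points, `p k a` counts the points of `Y` left of gap `a` at slot `k`, and `S k a` is the
size of the symmetric difference of this set with the set of points of `Y` left of gap `a0` at slot `0`.
A wall with left spin `c` is only ever crossed by points outside `Y`, and a swap of two points of `Y` cannot
decrease `S`; hence `stay`. -/
structure Pot (c : Bool) (y : ℤ) (a0 : ℕ) where
  p : ℕ → ℕ → ℤ
  S : ℕ → ℕ → ℤ
  stay : ∀ k a, k < T → a ≤ n → Q.opp k a = a → Q.Wall k a →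
    p (k + 1) a = p k a ∧ S k a ≤ S (k + 1) a ∧ (Q.M k a = c → S (k + 1) a = S k a)
  off : ∀ k a, k < T → a ≤ n → Q.opp k a ≠ a → p (k + 1) a = p k a ∧ S (k + 1) a = S k a
  flip : ∀ k a, k < T → a ≤ n → Q.opp k a ≠ a →
    |p k (Q.opp k a) - p k a| ≤ 1 ∧ |S k (Q.opp k a) - S k a| ≤ 1
  S_zero : ∀ a ≤ n, S 0 a = |p 0 a - p 0 a0|
  S_top : ∀ a ≤ n, S T a = min (p 0 a0 + p T a) (2 * y - p 0 a0 - p T a)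
  p_rev : ∀ a ≤ n, p T a = y - p 0 (n - a)

namespace Pot

variable {Q} {c : Bool} {y : ℤ} {a0 : ℕ} (P : Pot Q c y a0)

/-- The value, in terms of the number of points of `Y` on the left, that the potential takes in winding
`m ≠ 0`: the extreme value of the size of a symmetric difference (least for `m < 0`, greatest for `m > 0`) of
two sets of sizes `p 0 a0` and `q`. -/
noncomputable def prof (m q : ℤ) : ℤ :=
  if 0 < m then min (P.p 0 a0 + q) (2 * y - P.p 0 a0 - q) else |q - P.p 0 a0|

lemma prof_lip (m q q' : ℤ) (h : |q - q'| ≤ 1) : |P.prof m q - P.prof m q'| ≤ 1 := by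
  unfold prof
  grind

/-- The potential at the wall `w` reached with total winding `m`. After an odd number of half turns left
and right are exchanged. -/
noncomputable def U (m : ℤ) (w : ℕ × ℕ) : ℤ :=
  if m = 0 then P.S w.1 w.2 else P.prof m (if Even m then P.p w.1 w.2 else y - P.p w.1 w.2)

/-- The potential is continuous across the seam. -/
lemma U_seam (m : ℤ) {a : ℕ} (ha : a ≤ n) : P.U (m + 1) (0, n - a) = P.U m (T, a) := by
  have h1 := P.p_rev a ha
  have h2 := P.S_top a ha
  have h3 := P.S_zero (n - a) (by omega)
  unfold U prof
  simp only [Int.even_add_one]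
  by_cases hm : m = 0
  · subst hm; simp [h2, h1]
  · by_cases hm' : m + 1 = 0
    · obtain rfl : m = -1 := by omega
      simp [h3, h1]
    · have : (0 < m + 1) = (0 < m) := by simp; omega
      simp only [hm, hm', this, if_false, h1]
      by_cases he : Even m <;> simp [he]

lemma U_stay (m : ℤ) {k a : ℕ} (hk : k < T) (ha : a ≤ n) (ho : Q.opp k a = a) (hw : Q.Wall k a) :
    P.U m (k, a) ≤ P.U m (k + 1, a) ∧ (Q.M k a = c → P.U m (k + 1, a) = P.U m (k, a)) := by
  obtain ⟨h1, h2, h3⟩ := P.stay k a hk ha ho hw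
  unfold U
  by_cases hm : m = 0
  · simp only [hm, if_true]; exact ⟨h2, h3⟩
  · simp [hm, h1]

lemma U_off (m : ℤ) {k a : ℕ} (hk : k < T) (ha : a ≤ n) (ho : Q.opp k a ≠ a) :
    P.U m (k + 1, a) = P.U m (k, a) := by
  obtain ⟨h1, h2⟩ := P.off k a hk ha ho
  simp only [U, h1, h2]

lemma U_flip (m : ℤ) {k a : ℕ} (hk : k < T) (ha : a ≤ n) (ho : Q.opp k a ≠ a) :
    |P.U m (k, Q.opp k a) - P.U m (k, a)| ≤ 1 := by
  obtain ⟨h1, h2⟩ := P.flip k a hk ha ho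
  unfold U
  by_cases hm : m = 0
  · simpa only [hm, if_true] using h2
  · simp only [hm, if_false]
    apply P.prof_lip
    split_ifs
    · exact h1
    · rw [abs_sub_comm] at h1
      convert h1 using 2; ring

/-- The potential along a step: with the colour class `c = false` it grows by at most one, and only at a
flip; with `c = true` it drops by at most one, and only at a flip. -/
lemma U_step (m : ℤ) {w w' : ℕ × ℕ} (h : Q.Step w w') :
    (c = false → P.U (m + Q.wind w) w' ≤ P.U m w + if Q.IsFlip w then 1 else 0) ∧
    (c = true → P.U m w ≤ P.U (m + Q.wind w) w' + if Q.IsFlip w then 1 else 0) := by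
  have hnn : (0 : ℤ) ≤ if Q.IsFlip w then 1 else 0 := by split_ifs <;> simp
  cases h with
  | @seamUp a ha h0 h1 h2 h3 =>
    have e : Q.wind (T, a) = 1 := by simp [wind, h1]
    rw [e, P.U_seam m ha]
    constructor <;> intro <;> omega
  | @up k a hk ha h h0 h1 h2 h3 =>
    have e : Q.wind (k, a) = 0 := by simp [wind, h1, hk.ne]
    obtain ⟨h4, h5⟩ := P.U_stay m hk ha h h0
    rw [e, add_zero]
    constructor
    · rintro rfl
      have := h5 h1
      omega
    · intro; omega
  | @flipUp k a hk ha h h0 h1 h2 h3 =>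
    have e : Q.wind (k, a) = 0 := by simp [wind, h1, hk.ne]
    have hf : Q.IsFlip (k, a) := Or.inl ⟨h1, hk, h⟩
    have h4 := abs_le.1 (P.U_flip m hk ha h)
    rw [e, add_zero, if_pos hf, P.U_off m hk (Q.opp_le hk ha) (by rw [Q.opp_opp hk]; exact h.symm)]
    constructor <;> intro <;> omega
  | @flipUpDown k a hk ha h h0 h1 h2 h3 =>
    have e : Q.wind (k, a) = 0 := by simp [wind, h1, hk.ne]
    have hf : Q.IsFlip (k, a) := Or.inl ⟨h1, hk, h⟩
    have h4 := abs_le.1 (P.U_flip m hk ha h)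
    rw [e, add_zero, if_pos hf]
    constructor <;> intro <;> omega
  | @seamDown a ha h0 h1 h2 h3 =>
    have e : Q.wind (0, a) = -1 := by simp [wind, h1]
    have h4 := P.U_seam (m + -1) (a := n - a) (by omega)
    rw [Nat.sub_sub_self ha, show m + -1 + 1 = m by ring] at h4
    rw [e, h4]
    constructor <;> intro <;> omega
  | @down k a hk ha h h0 h1 h2 h3 =>
    have e : Q.wind (k + 1, a) = 0 := by simp [wind, h1]
    obtain ⟨h4, h5⟩ := P.U_stay m hk ha h h2
    rw [e, add_zero]
    constructor
    · intro; omega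
    · rintro rfl
      have := h5 h3
      omega
  | @flipDown k a hk ha h h0 h1 h2 h3 =>
    have e : Q.wind (k + 1, a) = 0 := by simp [wind, h1]
    have hf : Q.IsFlip (k + 1, a) := Or.inr ⟨h1, by simp, h⟩
    have h4 := abs_le.1 (P.U_flip m hk ha h)
    rw [e, add_zero, if_pos hf, P.U_off m hk ha h]
    constructor <;> intro <;> omega
  | @flipDownUp k a hk ha h h0 h1 h2 h3 =>
    have e : Q.wind (k + 1, a) = 0 := by simp [wind, h1]
    have hf : Q.IsFlip (k + 1, a) := Or.inr ⟨h1, by simp, h⟩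
    have h4 := abs_le.1 (P.U_flip m hk ha h)
    rw [e, add_zero, if_pos hf, P.U_off m hk ha h,
      P.U_off m hk (Q.opp_le hk ha) (by rw [Q.opp_opp hk]; exact h.symm)]
    constructor <;> intro <;> omega

lemma U_start (ha0 : a0 ≤ n) : P.U 0 (0, a0) = 0 := by
  simp [U, P.S_zero a0 ha0]

/-- After an odd positive total winding the walk is back at its starting gap with left and right
exchanged, so that all `y` points have been crossed. -/
lemma U_end {m : ℤ} (hm : 0 < m) (ho : Odd m) : P.U m (0, a0) = y := by
  have : ¬ Even m := Int.not_even_iff_odd.2 ho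
  simp only [U, hm.ne', if_false, this, prof, hm, if_true]
  rw [show P.p 0 a0 + (y - P.p 0 a0) = y by ring,
    show 2 * y - P.p 0 a0 - (y - P.p 0 a0) = y by ring, min_self]

end Pot

end SpinSys

/-- If `s` has odd sum over a finite set, some cycle of a permutation of that set has odd `s`-sum. The
cycle can be entered at a point where `s` does not vanish, or at its successor. -/
theorem exists_odd_cycle {α : Type*} [Fintype α] (φ : Equiv.Perm α) (s : α → ℤ)
    (h : Odd (∑ x, s x)) :
    ∃ x, s x ≠ 0 ∧ Odd (∑ j ∈ Finset.range (Function.minimalPeriod φ x), s (φ^[j] x)) ∧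
      Odd (∑ j ∈ Finset.range (Function.minimalPeriod φ (φ x)), s (φ^[j] (φ x))) := by
  have hper : ∀ x, x ∈ Function.periodicPts φ := fun x =>
    Function.Injective.mem_periodicPts φ.injective x
  have key : ∀ x, ∑ j ∈ Finset.range (Function.minimalPeriod φ x), s (φ^[j] x) =
      ∑ z with φ.SameCycle x z, s z := by
    intro x
    refine Finset.sum_bij (fun j _ => φ^[j] x) ?_ ?_ ?_ (fun _ _ => rfl)
    · intro j _
      simp only [Finset.mem_filter, Finset.mem_univ, true_and]
      exact ⟨j, by simp [Equiv.Perm.iterate_eq_pow]⟩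
    · intro i hi j hj hij
      exact Function.iterate_injOn_Iio_minimalPeriod (by simpa using hi) (by simpa using hj) hij
    · intro z hz
      simp only [Finset.mem_filter, Finset.mem_univ, true_and] at hz
      obtain ⟨i, _, hi⟩ := hz.exists_pow_eq'
      refine ⟨i % Function.minimalPeriod φ x, ?_, ?_⟩
      · simpa using Nat.mod_lt _ (Function.minimalPeriod_pos_of_mem_periodicPts (hper x))
      · rw [Function.iterate_mod_minimalPeriod_eq, Equiv.Perm.iterate_eq_pow, hi]
  have hshift : ∀ x, ∑ z with φ.SameCycle (φ x) z, s z = ∑ z with φ.SameCycle x z, s z := by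
    intro x
    simp only [Equiv.Perm.sameCycle_apply_left]
  suffices ∃ x, s x ≠ 0 ∧ Odd (∑ z with φ.SameCycle x z, s z) by
    obtain ⟨x, hx, hx'⟩ := this
    exact ⟨x, hx, by rw [key]; exact hx', by rw [key, hshift]; exact hx'⟩
  by_contra! hcon
  rw [Finset.sum_partition (Equiv.Perm.SameCycle.setoid φ)] at h
  apply Int.not_even_iff_odd.2 h
  apply Finset.even_sum
  intro q _
  induction q using Quotient.inductionOn with
  | h x =>
  by_cases hz : ∃ z, φ.SameCycle x z ∧ s z ≠ 0
  · obtain ⟨z, hz, hz'⟩ := hz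
    have h1 := hcon z hz'
    rw [Int.not_odd_iff_even] at h1
    refine (congrArg Even (Finset.sum_congr (Finset.ext fun t => ?_) fun _ _ => rfl)).mpr h1
    simp only [Finset.mem_filter, Finset.mem_univ, true_and]
    rw [Quotient.eq]
    exact ⟨fun h => (hz.symm).trans (Equiv.Perm.SameCycle.symm h), fun h => (hz.trans h).symm⟩
  · push Not at hz
    rw [Finset.sum_eq_zero]
    · simp
    · intro t ht
      simp only [Finset.mem_filter, Finset.mem_univ, true_and] at ht
      rw [Quotient.eq] at ht
      exact hz t (Equiv.Perm.SameCycle.symm ht)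

/-! ### A closed walk of odd winding and the bound on flips -/

namespace SpinSys

variable {n T : ℕ} (Q : SpinSys n T)

lemma finite_walls : Finite {w : ℕ × ℕ // Q.IsWall w} := by
  apply Set.Finite.to_subtype
  refine (Finset.finite_toSet (Finset.range (T + 1) ×ˢ Finset.range (n + 1))).subset ?_
  rintro ⟨k, a⟩ ⟨hk, ha, _⟩
  simp only at hk ha
  simp only [Finset.coe_product, Set.mem_prod, Finset.mem_coe, Finset.mem_range]
  omega

/-- Walls of a given type at a given slot, counted over all walls or over the gaps of that slot. -/
lemma sum_slot [Fintype {w : ℕ × ℕ // Q.IsWall w}] {K : ℕ} (hK : K ≤ T) (c : Bool) :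
    ∑ w : {w : ℕ × ℕ // Q.IsWall w}, (if w.1.1 = K ∧ Q.M w.1.1 w.1.2 = c then (1 : ℤ) else 0) =
      ∑ a ∈ Finset.range (n + 1), if Q.Wall K a ∧ Q.M K a = c then (1 : ℤ) else 0 := by
  have h : ∀ w : ℕ × ℕ,
      w ∈ (Finset.range (T + 1) ×ˢ Finset.range (n + 1)).filter Q.IsWall ↔ Q.IsWall w := by
    rintro ⟨k, a⟩
    simp only [Finset.mem_filter, Finset.mem_product, Finset.mem_range, IsWall]
    constructor
    · exact fun h => h.2
    · exact fun h => ⟨⟨by omega, by omega⟩, h⟩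
  rw [← Finset.sum_subtype _ h (fun w => if w.1 = K ∧ Q.M w.1 w.2 = c then (1 : ℤ) else 0),
    Finset.sum_filter, Finset.sum_product, Finset.sum_eq_single K]
  · apply Finset.sum_congr rfl
    intro a ha
    have ha : a ≤ n := by simpa [Nat.lt_succ_iff] using ha
    simp only [IsWall, hK, ha, true_and]
    by_cases h1 : Q.Wall K a <;> simp [h1]
  · intro k _ hk
    apply Finset.sum_eq_zero
    intro a _
    simp [hk]
  · intro h
    simp at h
    omega

/-- The total winding of all wall steps is `1`: the spins of slot `0` start with `false` and end with `true`,
so walls `false | true` outnumber walls `true | false` by one. -/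
lemma sum_wind [Fintype {w : ℕ × ℕ // Q.IsWall w}] :
    ∑ w : {w : ℕ × ℕ // Q.IsWall w}, Q.wind w.1 = 1 := by
  unfold wind
  rw [Finset.sum_sub_distrib, Q.sum_slot le_rfl, Q.sum_slot (Nat.zero_le T)]
  have h1 : ∑ a ∈ Finset.range (n + 1), (if Q.Wall T a ∧ Q.M T a = false then (1 : ℤ) else 0) =
      ∑ a ∈ Finset.range (n + 1), if Q.Wall 0 a ∧ Q.M 0 a = false then (1 : ℤ) else 0 := by
    rw [← Finset.sum_range_reflect (fun a => if Q.Wall 0 a ∧ Q.M 0 a = false then (1 : ℤ) else 0)]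
    apply Finset.sum_congr rfl
    intro a ha
    have ha : a ≤ n := by simpa [Nat.lt_succ_iff] using ha
    obtain ⟨h2, h3⟩ := Q.wall_rev ha
    rw [show n + 1 - 1 - a = n - a by omega]
    congr 1
    apply propext
    rw [← h2]
    constructor
    · rintro ⟨x, y⟩; exact ⟨x, by rw [← h3 x, y]⟩
    · rintro ⟨x, y⟩; exact ⟨x, by rw [h3 x, y]⟩
  rw [h1, ← Finset.sum_sub_distrib]
  have h2 := Finset.sum_range_sub (fun a => if Q.M 0 a = true then (1 : ℤ) else 0) (n + 1)
  rw [Q.M_left 0 (Nat.zero_le T), Q.M_right 0 (Nat.zero_le T)] at h2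
  refine Eq.trans ?_ (h2.trans (by simp))
  apply Finset.sum_congr rfl
  intro a _
  unfold Wall
  cases Q.M 0 a <;> cases Q.M 0 (a + 1) <;> simp

/-- A closed walk along walls with odd total winding, without repetition, based at slot `0`. -/
theorem exists_walk : ∃ (N : ℕ) (w : ℕ → ℕ × ℕ) (a0 : ℕ), a0 ≤ n ∧ w 0 = (0, a0) ∧ w N = (0, a0) ∧
    (∀ j, Q.IsWall (w j)) ∧ (∀ j, Q.Step (w j) (w (j + 1))) ∧
    (∀ i < N, ∀ j < N, w i = w j → i = j) ∧ Odd (∑ j ∈ Finset.range N, Q.wind (w j)) := by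
  have := Q.finite_walls
  have := Fintype.ofFinite {w : ℕ × ℕ // Q.IsWall w}
  let f : {w : ℕ × ℕ // Q.IsWall w} → {w : ℕ × ℕ // Q.IsWall w} :=
    fun w => ⟨Q.nxt w.1, (Q.step_nxt w.2).isWall_right⟩
  have hf : Function.Injective f := by
    intro w w' h
    have h1 : Q.nxt w.1 = Q.nxt w'.1 := congrArg Subtype.val h
    apply Subtype.ext
    rw [← (Q.step_nxt w.2).prv_eq, ← (Q.step_nxt w'.2).prv_eq, h1]
  let φ : Equiv.Perm _ := Equiv.ofBijective f (Finite.injective_iff_bijective.1 hf)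
  have main : ∀ x : {w : ℕ × ℕ // Q.IsWall w}, x.1.1 = 0 →
      Odd (∑ j ∈ Finset.range (Function.minimalPeriod φ x), Q.wind (φ^[j] x).1) →
      ∃ (N : ℕ) (w : ℕ → ℕ × ℕ) (a0 : ℕ), a0 ≤ n ∧ w 0 = (0, a0) ∧ w N = (0, a0) ∧
      (∀ j, Q.IsWall (w j)) ∧ (∀ j, Q.Step (w j) (w (j + 1))) ∧
      (∀ i < N, ∀ j < N, w i = w j → i = j) ∧ Odd (∑ j ∈ Finset.range N, Q.wind (w j)) := by
    intro x hx hodd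
    refine ⟨Function.minimalPeriod φ x, fun j => (φ^[j] x).1, x.1.2, x.2.2.1, ?_, ?_, ?_, ?_, ?_, hodd⟩
    · exact Prod.ext hx rfl
    · simp only [Function.iterate_minimalPeriod]
      exact Prod.ext hx rfl
    · exact fun j => (φ^[j] x).2
    · intro j
      simp only [Function.iterate_succ_apply']
      exact Q.step_nxt (φ^[j] x).2
    · intro i hi j hj hij
      exact Function.iterate_injOn_Iio_minimalPeriod (by simpa using hi) (by simpa using hj)
        (Subtype.ext hij)
  obtain ⟨x, hx, h1, h2⟩ := exists_odd_cycle φ (fun w => Q.wind w.1) (by rw [Q.sum_wind]; exact odd_one)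
  by_cases hx0 : x.1.1 = 0
  · exact main x hx0 h1
  · refine main (φ x) ?_ h2
    have h3 : x.1.1 = T ∧ Q.M x.1.1 x.1.2 = false := by
      by_contra hcon
      exact hx (by simp [wind, hx0, hcon])
    change (Q.nxt x.1).1 = 0
    rw [nxt, if_pos h3.2, up, if_pos h3.1]

/-- Along a closed walk of odd winding the potential has to climb from `0` to `y`, one unit per flip. For
positive winding the class `c = false` is used; for negative winding the class `c = true`, with the winding
measured from the end of the walk. -/
theorem flips_ge (r : ℕ) (y1 y2 : ℤ) (hy1 : (r : ℤ) ≤ y1) (hy2 : (r : ℤ) ≤ y2)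
    (P1 : ∀ a0 ≤ n, Nonempty (Pot Q false y1 a0)) (P2 : ∀ a0 ≤ n, Nonempty (Pot Q true y2 a0)) :
    r ≤ ((Finset.range T).filter Q.fl).card := by
  obtain ⟨N, w, a0, ha0, hw0, hwN, hw, hst, hinj, hodd⟩ := Q.exists_walk
  set mm : ℕ → ℤ := fun j => ∑ i ∈ Finset.range j, Q.wind (w i) with hmm
  set F : ℕ → ℤ := fun j => ∑ i ∈ Finset.range j, if Q.IsFlip (w i) then (1 : ℤ) else 0 with hF
  have hm1 : ∀ j, mm (j + 1) = mm j + Q.wind (w j) := fun j => Finset.sum_range_succ _ _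
  have hF1 : ∀ j, F (j + 1) = F j + if Q.IsFlip (w j) then (1 : ℤ) else 0 :=
    fun j => Finset.sum_range_succ _ _
  have hm0 : mm 0 = 0 := by simp [hmm]
  have hF0 : F 0 = 0 := by simp [hF]
  have hFN : F N ≤ ((Finset.range T).filter Q.fl).card := by
    simp only [hF]
    rw [Finset.sum_boole]
    norm_cast
    refine Finset.card_le_card_of_injOn (fun i => Q.evIdx (w i)) ?_ ?_
    · intro i hi
      simp only [Finset.coe_filter, Finset.mem_range, Set.mem_ofPred_eq] at hi
      obtain ⟨k, c, h1, h2, h3, _⟩ := Q.isFlip_spec (hw i) hi.2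
      simp only [Finset.coe_filter, Finset.mem_range, Set.mem_ofPred_eq, h3]
      exact ⟨h1, h2⟩
    · intro i hi j hj hij
      simp only [Finset.coe_filter, Finset.mem_range, Set.mem_ofPred_eq] at hi hj
      exact hinj i hi.1 j hj.1 (Q.isFlip_inj (hw i) hi.2 (hw j) hj.2 hij)
  suffices (r : ℤ) ≤ F N by exact_mod_cast this.trans hFN
  change Odd (mm N) at hodd
  rcases lt_trichotomy (mm N) 0 with hneg | hz | hpos
  · obtain ⟨P⟩ := P2 a0 ha0
    have key : ∀ j, P.U (mm 0 - mm N) (w 0) ≤ P.U (mm j - mm N) (w j) + F j := by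
      intro j
      induction j with
      | zero => rw [hF0]; simp
      | succ j ih =>
        have h1 := (P.U_step (mm j - mm N) (hst j)).2 rfl
        rw [hF1, hm1, show mm j + Q.wind (w j) - mm N = mm j - mm N + Q.wind (w j) by ring]
        omega
    -- at the end of the walk the shifted winding is `0`, at its start it is odd and positive
    have h1 := key N
    rw [sub_self, hm0, hw0, hwN, P.U_start ha0, P.U_end (by omega) (by simpa using hodd.neg)] at h1
    omega
  · rw [hz] at hodd
    exact absurd hodd (by decide)
  · obtain ⟨P⟩ := P1 a0 ha0
    have key : ∀ j, P.U (mm j) (w j) ≤ F j := by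
      intro j
      induction j with
      | zero => rw [hF0, hm0, hw0, P.U_start ha0]
      | succ j ih =>
        have h1 := (P.U_step (mm j) (hst j)).1 rfl
        rw [hF1, hm1]
        omega
    have h1 := key N
    rw [hwN, P.U_end hpos hodd] at h1
    omega

end SpinSys

/-! ### From positions to spin systems -/

/-- A simple sequence of permutations of `X` in terms of positions `1, …, X.card`: event `k` swaps the
points `fst k`, `snd k`, which are adjacent at slot `k`; slot `T` is the reverse of slot `0`, and every event
swaps a pair that is in its slot `0` order. -/
structure PosSeq {α : Type*} (X : Finset α) (T : ℕ) where
  pos : ℕ → α → ℕ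
  fst : ℕ → α
  snd : ℕ → α
  fst_mem : ∀ k < T, fst k ∈ X
  snd_mem : ∀ k < T, snd k ∈ X
  pos_pos : ∀ k ≤ T, ∀ x ∈ X, 1 ≤ pos k x
  pos_le : ∀ k ≤ T, ∀ x ∈ X, pos k x ≤ X.card
  pos_inj : ∀ k ≤ T, ∀ x ∈ X, ∀ y ∈ X, pos k x = pos k y → x = y
  pos_snd : ∀ k < T, pos k (snd k) = pos k (fst k) + 1
  pos_succ_fst : ∀ k < T, pos (k + 1) (fst k) = pos k (fst k) + 1
  pos_succ_snd : ∀ k < T, pos (k + 1) (snd k) = pos k (fst k)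
  pos_succ : ∀ k < T, ∀ x ∈ X, x ≠ fst k → x ≠ snd k → pos (k + 1) x = pos k x
  pos_rev : ∀ x ∈ X, pos T x + pos 0 x = X.card + 1
  pos_zero : ∀ k < T, pos 0 (fst k) < pos 0 (snd k)

namespace PosSeq

variable {α : Type*} {X : Finset α} {T : ℕ} (Z : PosSeq X T)

/-- The `f`-weight of the first `a` points at slot `k`. -/
noncomputable def G (f : α → ℤ) (k a : ℕ) : ℤ := ∑ x ∈ X, if Z.pos k x ≤ a then f x else 0

lemma fst_ne_snd {k : ℕ} (hk : k < T) : Z.fst k ≠ Z.snd k := by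
  intro h
  have := Z.pos_zero k hk
  rw [h] at this
  omega

lemma G_next (f : α → ℤ) {k : ℕ} (hk : k < T) (a : ℕ) :
    Z.G f (k + 1) a = Z.G f k a + if a = Z.pos k (Z.fst k) then f (Z.snd k) - f (Z.fst k) else 0 := by
  have h1 : Z.G f (k + 1) a - Z.G f k a = ∑ x ∈ ({Z.fst k, Z.snd k} : Finset α),
      ((if Z.pos (k + 1) x ≤ a then f x else 0) - if Z.pos k x ≤ a then f x else 0) := by
    unfold G
    rw [← Finset.sum_sub_distrib]
    symm
    apply Finset.sum_subset
    · intro x hx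
      simp only [Finset.mem_insert, Finset.mem_singleton] at hx
      rcases hx with rfl | rfl
      · exact Z.fst_mem k hk
      · exact Z.snd_mem k hk
    · intro x hx hx'
      simp only [Finset.mem_insert, Finset.mem_singleton, not_or] at hx'
      rw [Z.pos_succ k hk x hx hx'.1 hx'.2, sub_self]
  rw [Finset.sum_pair (Z.fst_ne_snd hk), Z.pos_snd k hk, Z.pos_succ_fst k hk,
    Z.pos_succ_snd k hk] at h1
  rw [← sub_eq_iff_eq_add', h1]
  split_ifs <;> omega

lemma G_succ (f : α → ℤ) {k : ℕ} (hk : k ≤ T) {a : ℕ} {x : α} (hx : x ∈ X)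
    (h : Z.pos k x = a + 1) : Z.G f k (a + 1) = Z.G f k a + f x := by
  rw [← sub_eq_iff_eq_add']
  unfold G
  rw [← Finset.sum_sub_distrib, Finset.sum_eq_single x]
  · rw [h]; simp
  · intro y hy hxy
    have : Z.pos k y ≠ a + 1 := fun h' => hxy (Z.pos_inj k hk y hy x hx (by omega))
    split_ifs <;> omega
  · exact fun h => absurd hx h

lemma G_zero (f : α → ℤ) {k : ℕ} (hk : k ≤ T) : Z.G f k 0 = 0 := by
  apply Finset.sum_eq_zero
  intro x hx
  have := Z.pos_pos k hk x hx
  rw [if_neg (by omega)]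

lemma G_rev (f : α → ℤ) {a : ℕ} (ha : a ≤ X.card) :
    Z.G f T a = ∑ x ∈ X, f x - Z.G f 0 (X.card - a) := by
  rw [eq_sub_iff_add_eq]
  unfold G
  rw [← Finset.sum_add_distrib]
  apply Finset.sum_congr rfl
  intro x hx
  have := Z.pos_rev x hx
  split_ifs <;> omega

lemma G_mono {f : α → ℤ} (hf : ∀ x, 0 ≤ f x) (k : ℕ) {a b : ℕ} (hab : a ≤ b) :
    Z.G f k a ≤ Z.G f k b := by
  apply Finset.sum_le_sum
  intro x _
  have := hf x
  split_ifs <;> omega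

lemma G_le {f : α → ℤ} (hf : ∀ x, 0 ≤ f x) (k a : ℕ) : Z.G f k a ≤ ∑ x ∈ X, f x := by
  apply Finset.sum_le_sum
  intro x _
  have := hf x
  split_ifs <;> simp [this]

lemma exists_pos {k : ℕ} (hk : k ≤ T) {j : ℕ} (h1 : 1 ≤ j) (h2 : j ≤ X.card) :
    ∃ x ∈ X, Z.pos k x = j := by
  have := Finset.surjOn_of_injOn_of_card_le (s := X) (t := Finset.Icc 1 X.card) (Z.pos k)
    (fun x hx => by simpa using ⟨Z.pos_pos k hk x hx, Z.pos_le k hk x hx⟩)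
    (fun x hx y hy h => Z.pos_inj k hk x hx y hy h) (by simp)
  obtain ⟨x, hx, h⟩ := this (show j ∈ (Finset.Icc 1 X.card : Finset ℕ) by simpa using ⟨h1, h2⟩)
  exact ⟨x, hx, h⟩

variable (col : α → Bool) (δ : ℕ)

/-- Blue (`true`) points weigh `1`, red ones `-1`. -/
def wt (x : α) : ℤ := if col x then 1 else -1

/-- The colour excess of the first `a` points at slot `k`. -/
noncomputable def h (k a : ℕ) : ℤ := Z.G (wt col) k a

/-- The spin of site `j`: whether the average of the colour excesses in the gaps `j - 1` and `j` exceeds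
`δ`. The truncated subtraction at `j = 0` gives the excess `0` twice, hence the spin `false`; the site
beyond the last point gets the spin `true`. -/
noncomputable def M (k j : ℕ) : Bool :=
  decide (X.card < j ∨ 2 * (δ : ℤ) < Z.h col k (j - 1) + Z.h col k j)

/-- The left one of the two positions swapped by event `k`. -/
def ev (k : ℕ) : ℕ := Z.pos k (Z.fst k)

/-- Event `k` flips: the swapped points have different colours, with excess `δ` to their left. For a sweep
of the plane this says that the line through them is balanced. -/
def fl (k : ℕ) : Prop :=
  col (Z.fst k) ≠ col (Z.snd k) ∧ Z.h col k (Z.ev k - 1) = δ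

lemma ev_pos {k : ℕ} (hk : k < T) : 1 ≤ Z.ev k := Z.pos_pos k hk.le _ (Z.fst_mem k hk)

lemma ev_lt {k : ℕ} (hk : k < T) : Z.ev k + 1 ≤ X.card := by
  have := Z.pos_le k hk.le _ (Z.snd_mem k hk)
  rwa [Z.pos_snd k hk] at this

lemma G_around (f : α → ℤ) {k : ℕ} (hk : k < T) :
    Z.G f k (Z.ev k) = Z.G f k (Z.ev k - 1) + f (Z.fst k) ∧
    Z.G f k (Z.ev k + 1) = Z.G f k (Z.ev k - 1) + f (Z.fst k) + f (Z.snd k) ∧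
    Z.G f (k + 1) (Z.ev k) = Z.G f k (Z.ev k - 1) + f (Z.snd k) := by
  have h0 := Z.ev_pos hk
  have h1 := Z.G_succ f hk.le (a := Z.ev k - 1) (Z.fst_mem k hk) (by unfold ev at *; omega)
  rw [Nat.sub_add_cancel h0] at h1
  have h2 := Z.G_succ f hk.le (a := Z.ev k) (Z.snd_mem k hk) (Z.pos_snd k hk)
  have h3 := Z.G_next f hk (Z.ev k)
  rw [if_pos (by rfl)] at h3
  refine ⟨h1, by rw [h2, h1], by rw [h3, h1]; ring⟩

lemma G_next_ne (f : α → ℤ) {k : ℕ} (hk : k < T) {a : ℕ} (ha : a ≠ Z.ev k) :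
    Z.G f (k + 1) a = Z.G f k a := by
  have ha : a ≠ Z.pos k (Z.fst k) := ha
  rw [Z.G_next f hk, if_neg ha, add_zero]

/-- The spins at the two swapped positions before and after event `k`, in terms of the excess to the left
of the pair and the two colours. -/
lemma M_ev {k : ℕ} (hk : k < T) :
    Z.M col δ k (Z.ev k) =
      decide (2 * (δ : ℤ) < 2 * Z.h col k (Z.ev k - 1) + wt col (Z.fst k)) ∧
    Z.M col δ (k + 1) (Z.ev k) =
      decide (2 * (δ : ℤ) < 2 * Z.h col k (Z.ev k - 1) + wt col (Z.snd k)) ∧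
    Z.M col δ k (Z.ev k + 1) = decide (2 * (δ : ℤ) <
      2 * Z.h col k (Z.ev k - 1) + 2 * wt col (Z.fst k) + wt col (Z.snd k)) ∧
    Z.M col δ (k + 1) (Z.ev k + 1) = decide (2 * (δ : ℤ) <
      2 * Z.h col k (Z.ev k - 1) + wt col (Z.fst k) + 2 * wt col (Z.snd k)) := by
  obtain ⟨h1, h2, h3⟩ := Z.G_around (wt col) hk
  have h4 := Z.G_next_ne (wt col) hk (a := Z.ev k - 1) (by have := Z.ev_pos hk; omega)
  have h5 := Z.G_next_ne (wt col) hk (a := Z.ev k + 1) (by omega)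
  have h6 := Z.ev_lt hk
  unfold M h
  rw [Nat.add_sub_cancel, h1, h5, h2, h3, h4]
  refine ⟨?_, ?_, ?_, ?_⟩ <;> congr 1 <;> apply propext <;>
    constructor <;> intro h <;> omega

/-- The spin system of a coloured sequence of permutations with total excess `2δ`. Consecutive excesses
differ by one, so their sum is never `2δ` and the spins are antisymmetric under reversal. -/
noncomputable def spin (hδ : ∑ x ∈ X, wt col x = 2 * δ) : SpinSys X.card T where
  ev := Z.ev
  fl := Z.fl col δ
  M := Z.M col δ
  ev_pos _ hk := Z.ev_pos hk
  ev_lt _ hk := Z.ev_lt hk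
  M_off k hk j hj := by
    obtain ⟨h1, h2, h3, h4⟩ := Z.M_ev col δ hk
    by_cases h : j = Z.ev k ∨ j = Z.ev k + 1
    · have h5 : ¬ Z.fl col δ k := by tauto
      unfold fl wt at *
      rcases h with rfl | rfl
      · rw [h1, h2]
        congr 1
        apply propext
        revert h5
        cases col (Z.fst k) <;> cases col (Z.snd k) <;> simp <;> omega
      · rw [h3, h4]
        congr 1
        apply propext
        revert h5
        cases col (Z.fst k) <;> cases col (Z.snd k) <;> simp <;> omega
    · have h0 := Z.ev_pos hk
      unfold M PosSeq.h
      rw [Z.G_next_ne _ hk (by omega), Z.G_next_ne _ hk (by omega)]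
  M_on k hk hf := by
    obtain ⟨h1, h2, h3, h4⟩ := Z.M_ev col δ hk
    obtain ⟨h5, h6⟩ := hf
    rw [h1, h2, h3, h4, h6]
    unfold wt
    revert h5
    cases col (Z.fst k) <;> cases col (Z.snd k) <;> (simp; try omega)
  M_rev j hj := by
    unfold M h
    rcases Nat.eq_zero_or_pos j with rfl | h0
    · simp [Z.G_zero]
    · rcases hj.eq_or_lt with rfl | h1
      · simp [Z.G_zero]
      · have h2 := Z.G_rev (wt col) (a := j) (by omega)
        have h3 := Z.G_rev (wt col) (a := j - 1) (by omega)
        obtain ⟨x, hx, hx'⟩ := Z.exists_pos (Nat.zero_le T) (j := X.card + 1 - j) (by omega) (by omega)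
        have h4 := Z.G_succ (wt col) (Nat.zero_le T) (a := X.card - j) hx (by omega)
        rw [h2, h3, hδ, show X.card - (j - 1) = X.card - j + 1 by omega,
          show X.card + 1 - j = X.card - j + 1 by omega, Nat.add_sub_cancel, h4]
        have h5 : wt col x = 1 ∨ wt col x = -1 := by unfold wt; split_ifs <;> simp
        rw [← decide_not]
        congr 1
        apply propext
        omega
  M_left k hk := by simp [M, h, Z.G_zero _ hk]
  M_right k hk := by simp [M]

/-- Indicator of the colour class `c`. -/
noncomputable def ind (c : Bool) (x : α) : ℤ := if col x = c then 1 else 0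

/-- Indicator of the points of colour `c` left of gap `a0` at slot `0`. -/
noncomputable def indA (c : Bool) (a0 : ℕ) (x : α) : ℤ := if Z.pos 0 x ≤ a0 then ind col c x else 0

lemma ind_nonneg (c : Bool) (x : α) : 0 ≤ ind col c x := by
  unfold ind; split_ifs <;> simp

lemma G_indA (c : Bool) (a0 a : ℕ) :
    Z.G (Z.indA col c a0) 0 a = min (Z.G (ind col c) 0 a) (Z.G (ind col c) 0 a0) := by
  rcases le_total a a0 with h | h
  · rw [min_eq_left (Z.G_mono (ind_nonneg col c) 0 h)]
    apply Finset.sum_congr rfl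
    intro x _
    unfold indA
    split_ifs <;> omega
  · rw [min_eq_right (Z.G_mono (ind_nonneg col c) 0 h)]
    apply Finset.sum_congr rfl
    intro x _
    unfold indA
    split_ifs <;> omega

lemma opp_cases {n T : ℕ} (Q : SpinSys n T) {k a : ℕ} (hk : k < T) (h : Q.opp k a ≠ a) :
    Q.fl k ∧ ((a = Q.ev k - 1 ∧ Q.opp k a = Q.ev k + 1) ∨
      (a = Q.ev k + 1 ∧ Q.opp k a = Q.ev k - 1)) := by
  have := Q.ev_pos k hk
  unfold SpinSys.opp at *
  grind

/-- The potential data of the colour class `c`. A wall can lie between two swapped points only if they have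
the same colour, blue at a `false | true` wall and red at a `true | false` wall; a swap of two points of the
class in their initial order can only enlarge the symmetric difference `S`. -/
lemma pot (hδ : ∑ x ∈ X, wt col x = 2 * δ) (c : Bool) (a0 : ℕ) (_ha0 : a0 ≤ X.card) :
    Nonempty (SpinSys.Pot (Z.spin col δ hδ) c (∑ x ∈ X, ind col c x) a0) := by
  refine ⟨{
    p := Z.G (ind col c)
    S := fun k a => Z.G (ind col c) 0 a0 + Z.G (ind col c) k a - 2 * Z.G (Z.indA col c a0) k a
    stay := ?_
    off := ?_
    flip := ?_
    S_zero := ?_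
    S_top := ?_
    p_rev := fun a ha => Z.G_rev _ ha }⟩
  · intro k a hk ha ho hw
    by_cases hae : a = Z.ev k
    · subst hae
      obtain ⟨h1, h2, h3, h4⟩ := Z.M_ev col δ hk
      obtain ⟨e1, e2, e3⟩ := Z.G_around (ind col c) hk
      obtain ⟨d1, d2, d3⟩ := Z.G_around (Z.indA col c a0) hk
      have hp := Z.pos_zero k hk
      change Z.M col δ k (Z.ev k) ≠ Z.M col δ k (Z.ev k + 1) at hw
      change _ ∧ _ ∧ (Z.M col δ k (Z.ev k) = c → _)
      rw [h1, h3] at hw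
      rw [h1]
      simp only [e1, e3, d1, d3]
      unfold ind indA ind wt at *
      revert hw
      cases hf : col (Z.fst k) <;> cases hs : col (Z.snd k) <;> cases c <;> simp <;> grind
    · simp only [Z.G_next_ne _ hk hae]
      simp
  · intro k a hk ha ho
    have h1 := (opp_cases _ hk ho).2
    have h2 := Z.ev_pos hk
    change ((a = Z.ev k - 1 ∧ _) ∨ (a = Z.ev k + 1 ∧ _)) at h1
    simp only [Z.G_next_ne _ hk (show a ≠ Z.ev k by omega)]
    simp
  · intro k a hk ha ho
    obtain ⟨hf, h1⟩ := opp_cases _ hk ho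
    change Z.fl col δ k at hf
    obtain ⟨hf, -⟩ := hf
    obtain ⟨e1, e2, e3⟩ := Z.G_around (ind col c) hk
    obtain ⟨d1, d2, d3⟩ := Z.G_around (Z.indA col c a0) hk
    have key : |Z.G (ind col c) k (Z.ev k + 1) - Z.G (ind col c) k (Z.ev k - 1)| ≤ 1 ∧
        |Z.G (ind col c) k (Z.ev k + 1) - 2 * Z.G (Z.indA col c a0) k (Z.ev k + 1) -
          (Z.G (ind col c) k (Z.ev k - 1) - 2 * Z.G (Z.indA col c a0) k (Z.ev k - 1))| ≤ 1 := by
      rw [e2, d2]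
      unfold indA ind
      constructor <;> rw [abs_le] <;> grind
    rcases h1 with ⟨h1, h2⟩ | ⟨h1, h2⟩
    · rw [h2, h1]
      change |Z.G (ind col c) k (Z.ev k + 1) - Z.G (ind col c) k (Z.ev k - 1)| ≤ 1 ∧
        |(Z.G (ind col c) 0 a0 + Z.G (ind col c) k (Z.ev k + 1) - 2 * Z.G (Z.indA col c a0) k (Z.ev k + 1)) -
          (Z.G (ind col c) 0 a0 + Z.G (ind col c) k (Z.ev k - 1) - 2 * Z.G (Z.indA col c a0) k (Z.ev k - 1))| ≤ 1
      refine ⟨key.1, ?_⟩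
      convert key.2 using 2
      ring
    · rw [h2, h1]
      change |Z.G (ind col c) k (Z.ev k - 1) - Z.G (ind col c) k (Z.ev k + 1)| ≤ 1 ∧
        |(Z.G (ind col c) 0 a0 + Z.G (ind col c) k (Z.ev k - 1) - 2 * Z.G (Z.indA col c a0) k (Z.ev k - 1)) -
          (Z.G (ind col c) 0 a0 + Z.G (ind col c) k (Z.ev k + 1) - 2 * Z.G (Z.indA col c a0) k (Z.ev k + 1))| ≤ 1
      rw [abs_sub_comm, abs_sub_comm (Z.G (ind col c) 0 a0 + _ - _)]
      refine ⟨key.1, ?_⟩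
      convert key.2 using 2
      ring
  · intro a ha
    simp only [Z.G_indA]
    grind
  · intro a ha
    have h1 : ∑ x ∈ X, Z.indA col c a0 x = Z.G (ind col c) 0 a0 := rfl
    simp only [Z.G_rev _ ha, h1, Z.G_indA]
    grind

theorem flips_ge (hδ : ∑ x ∈ X, wt col x = 2 * δ) (r : ℕ)
    (h1 : (r : ℤ) ≤ ∑ x ∈ X, ind col false x) (h2 : (r : ℤ) ≤ ∑ x ∈ X, ind col true x) :
    r ≤ ((Finset.range T).filter (Z.fl col δ)).card :=
  SpinSys.flips_ge (Z.spin col δ hδ) r _ _ h1 h2 (Z.pot col δ hδ false) (Z.pot col δ hδ true)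

end PosSeq

/-! ### From allowable sequences to positions -/

/-- A simple allowable sequence on `X`: linear orders `lt 0, …, lt T` on `X`, where `lt k` and `lt (k + 1)`
differ exactly in the order of `fst k` and `snd k`, every event swaps a pair that is in its initial order,
and the last order is the reverse of the first. -/
structure AllowSeq {α : Type*} (X : Finset α) (T : ℕ) where
  lt : ℕ → α → α → Prop
  fst : ℕ → α
  snd : ℕ → α
  fst_mem : ∀ k < T, fst k ∈ X
  snd_mem : ∀ k < T, snd k ∈ X
  irrefl : ∀ k x, ¬ lt k x x
  trans : ∀ k ≤ T, ∀ x ∈ X, ∀ y ∈ X, ∀ z ∈ X, lt k x y → lt k y z → lt k x z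
  total : ∀ k ≤ T, ∀ x ∈ X, ∀ y ∈ X, x ≠ y → lt k x y ∨ lt k y x
  rev : ∀ x ∈ X, ∀ y ∈ X, lt T x y ↔ lt 0 y x
  lt_pair : ∀ k < T, lt k (fst k) (snd k)
  lt_pair_zero : ∀ k < T, lt 0 (fst k) (snd k)
  lt_pair_succ : ∀ k < T, lt (k + 1) (snd k) (fst k)
  lt_succ : ∀ k < T, ∀ x ∈ X, ∀ y ∈ X, ¬ (x = fst k ∧ y = snd k) → ¬ (x = snd k ∧ y = fst k) →
    (lt (k + 1) x y ↔ lt k x y)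

namespace AllowSeq

variable {α : Type*} {X : Finset α} {T : ℕ} (Z : AllowSeq X T)

/-- The points of `X` before `x` at slot `k`. -/
noncomputable def below (k : ℕ) (x : α) : Finset α := X.filter fun z => Z.lt k z x

lemma mem_below {k : ℕ} {x z : α} : z ∈ Z.below k x ↔ z ∈ X ∧ Z.lt k z x := by
  simp [below]

lemma asymm {k : ℕ} (hk : k ≤ T) {x y : α} (hx : x ∈ X) (hy : y ∈ X) (h : Z.lt k x y) :
    ¬ Z.lt k y x := fun h' => Z.irrefl k x (Z.trans k hk x hx y hy x hx h h')

lemma below_lt {k : ℕ} (hk : k ≤ T) {x y : α} (hx : x ∈ X) (hy : y ∈ X) (h : Z.lt k x y) :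
    (Z.below k x).card < (Z.below k y).card := by
  apply Finset.card_lt_card
  rw [Finset.ssubset_iff_of_subset]
  · exact ⟨x, Z.mem_below.2 ⟨hx, h⟩, fun h' => Z.irrefl k x (Z.mem_below.1 h').2⟩
  · intro z hz
    obtain ⟨h1, h2⟩ := Z.mem_below.1 hz
    exact Z.mem_below.2 ⟨h1, Z.trans k hk z h1 x hx y hy h2 h⟩

lemma lt_iff {k : ℕ} (hk : k ≤ T) {x y : α} (hx : x ∈ X) (hy : y ∈ X) :
    Z.lt k x y ↔ (Z.below k x).card < (Z.below k y).card := by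
  refine ⟨Z.below_lt hk hx hy, fun h => ?_⟩
  by_cases hxy : x = y
  · subst hxy; omega
  · rcases Z.total k hk x hx y hy hxy with h1 | h1
    · exact h1
    · have := Z.below_lt hk hy hx h1
      omega

lemma fst_ne_snd {k : ℕ} (hk : k < T) : Z.fst k ≠ Z.snd k := by
  intro h
  have := Z.lt_pair k hk
  rw [h] at this
  exact Z.irrefl _ _ this

/-- The two points swapped by an event are adjacent: a point strictly between them would violate
transitivity after the swap. -/
lemma below_snd {k : ℕ} (hk : k < T) :
    Z.below k (Z.snd k) = insert (Z.fst k) (Z.below k (Z.fst k)) := by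
  have hf := Z.fst_mem k hk
  have hs := Z.snd_mem k hk
  ext z
  rw [Finset.mem_insert, mem_below, mem_below]
  constructor
  · rintro ⟨hz, h⟩
    by_contra! hcon
    have h1 : Z.lt k (Z.fst k) z := by
      rcases Z.total k hk.le _ hf z hz (Ne.symm hcon.1) with h1 | h1
      · exact h1
      · exact absurd h1 (hcon.2 hz)
    have h2 : z ≠ Z.snd k := fun h' => Z.irrefl k _ (h' ▸ h)
    have h3 := (Z.lt_succ k hk _ hf z hz (by tauto) (by have := Z.fst_ne_snd hk; tauto)).2 h1
    have h4 := (Z.lt_succ k hk z hz _ hs (by tauto) (by tauto)).2 h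
    exact Z.asymm hk hf hs (Z.trans (k + 1) hk _ hf z hz _ hs h3 h4) (Z.lt_pair_succ k hk)
  · rintro (rfl | ⟨hz, h⟩)
    · exact ⟨hf, Z.lt_pair k hk⟩
    · exact ⟨hz, Z.trans k hk.le z hz _ hf _ hs h (Z.lt_pair k hk)⟩

lemma below_succ {k : ℕ} (hk : k < T) {x : α} (hx : x ∈ X) (h1 : x ≠ Z.fst k) (h2 : x ≠ Z.snd k) :
    Z.below (k + 1) x = Z.below k x := by
  ext z
  simp only [mem_below]
  refine and_congr_right fun hz => Z.lt_succ k hk z hz x hx (by tauto) (by tauto)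

lemma below_succ_snd {k : ℕ} (hk : k < T) :
    Z.below (k + 1) (Z.snd k) = Z.below k (Z.fst k) := by
  have hf := Z.fst_mem k hk
  have hs := Z.snd_mem k hk
  have h0 := Z.fst_ne_snd hk
  ext z
  have h1 : z ∈ Z.below k (Z.snd k) ↔ z = Z.fst k ∨ z ∈ Z.below k (Z.fst k) := by
    rw [Z.below_snd hk, Finset.mem_insert]
  rw [mem_below, mem_below] at h1
  rw [mem_below, mem_below]
  by_cases hz : z = Z.fst k
  · subst hz
    exact ⟨fun h => absurd h.2 (Z.asymm hk hs hf (Z.lt_pair_succ k hk)),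
      fun h => absurd h.2 (Z.irrefl _ _)⟩
  · have h2 : z ∈ X → (Z.lt (k + 1) z (Z.snd k) ↔ Z.lt k z (Z.snd k)) := fun h =>
      Z.lt_succ k hk z h _ hs (by tauto) (by tauto)
    tauto

lemma below_succ_fst {k : ℕ} (hk : k < T) :
    Z.below (k + 1) (Z.fst k) = insert (Z.snd k) (Z.below k (Z.fst k)) := by
  have hf := Z.fst_mem k hk
  have hs := Z.snd_mem k hk
  have h0 := Z.fst_ne_snd hk
  ext z
  rw [Finset.mem_insert, mem_below, mem_below]
  by_cases hz : z = Z.snd k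
  · subst hz
    simp [hs, Z.lt_pair_succ k hk]
  · have h2 : z ∈ X → (Z.lt (k + 1) z (Z.fst k) ↔ Z.lt k z (Z.fst k)) := fun h =>
      Z.lt_succ k hk z h _ hf (by tauto) (by tauto)
    tauto

lemma below_rev {x : α} (hx : x ∈ X) :
    (Z.below T x).card + (Z.below 0 x).card + 1 = X.card := by
  have h1 : Disjoint (Z.below T x) (Z.below 0 x) := by
    rw [Finset.disjoint_left]
    intro z hz hz'
    rw [mem_below] at hz hz'
    exact Z.asymm (Nat.zero_le T) hz.1 hx hz'.2 ((Z.rev z hz.1 x hx).1 hz.2)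
  have h2 : x ∉ Z.below T x ∪ Z.below 0 x := by
    rw [Finset.mem_union, mem_below, mem_below]
    have := Z.irrefl T x
    have := Z.irrefl 0 x
    tauto
  rw [← Finset.card_union_of_disjoint h1, ← Finset.card_insert_of_notMem h2]
  congr 1
  ext z
  simp only [Finset.mem_insert, Finset.mem_union, mem_below]
  constructor
  · rintro (rfl | h | h)
    exacts [hx, h.1, h.1]
  · intro hz
    by_cases hzx : z = x
    · exact Or.inl hzx
    · right
      rcases Z.total T le_rfl z hz x hx hzx with h | h
      · exact Or.inl ⟨hz, h⟩
      · exact Or.inr ⟨hz, (Z.rev x hx z hz).1 h⟩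

/-- The positions of an allowable sequence. -/
noncomputable def toPos : PosSeq X T where
  pos k x := (Z.below k x).card + 1
  fst := Z.fst
  snd := Z.snd
  fst_mem := Z.fst_mem
  snd_mem := Z.snd_mem
  pos_pos _ _ _ _ := by omega
  pos_le k _ x hx := by
    have : (Z.below k x).card < X.card := by
      apply Finset.card_lt_card
      rw [below, Finset.ssubset_iff_of_subset (Finset.filter_subset _ _)]
      exact ⟨x, hx, fun h => Z.irrefl k x (Finset.mem_filter.1 h).2⟩
    omega
  pos_inj k hk x hx y hy h := by
    by_contra hxy
    rcases Z.total k hk x hx y hy hxy with h1 | h1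
    · have := Z.below_lt hk hx hy h1
      omega
    · have := Z.below_lt hk hy hx h1
      omega
  pos_snd k hk := by
    rw [Z.below_snd hk, Finset.card_insert_of_notMem]
    exact fun h => Z.irrefl _ _ (Z.mem_below.1 h).2
  pos_succ_fst k hk := by
    rw [Z.below_succ_fst hk, Finset.card_insert_of_notMem]
    exact fun h => Z.asymm hk.le (Z.fst_mem k hk) (Z.snd_mem k hk) (Z.lt_pair k hk)
      (Z.mem_below.1 h).2
  pos_succ_snd k hk := by rw [Z.below_succ_snd hk]
  pos_succ k hk x hx h1 h2 := by rw [Z.below_succ hk hx h1 h2]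
  pos_rev x hx := by
    have := Z.below_rev hx
    omega
  pos_zero k hk := by
    have := Z.below_lt (Nat.zero_le T) (Z.fst_mem k hk) (Z.snd_mem k hk) (Z.lt_pair_zero k hk)
    omega

lemma h_ev (col : α → Bool) {k : ℕ} (hk : k < T) :
    Z.toPos.h col k (Z.toPos.ev k - 1) =
      ∑ x ∈ X, if Z.lt k x (Z.fst k) then PosSeq.wt col x else 0 := by
  apply Finset.sum_congr rfl
  intro x hx
  congr 1
  rw [Z.lt_iff hk.le hx (Z.fst_mem k hk)]
  change ((Z.below k x).card + 1 ≤ (Z.below k (Z.fst k)).card + 1 - 1) = _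
  apply propext
  omega

end AllowSeq

/-! ### The allowable sequence of a planar point set -/

namespace Sweep

variable {α : Type*} (X : Finset α) (a b : α → ℝ)

/-- Slope of the line through the points `(a p.1, b p.1)` and `(a p.2, b p.2)`. -/
noncomputable def slope (p : α × α) : ℝ := (b p.2 - b p.1) / (a p.2 - a p.1)

/-- Slope and intercept of the line through a pair, ordered lexicographically. Ordering the pairs by
`key` resolves the simultaneous swaps of parallel lines one after the other. -/
noncomputable def key (p : α × α) : ℝ ×ₗ ℝ :=
  toLex (slope a b p, b p.1 - slope a b p * a p.1)

/-- The pairs of points, listed with increasing `a`. -/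
noncomputable def pairs : Finset (α × α) := (X ×ˢ X).filter fun p => a p.1 < a p.2

/-- Rank of a pair in the order of keys, i.e. the event at which the pair is swapped. -/
noncomputable def idx (p : α × α) : ℕ := ((pairs X a).filter fun q => key a b q < key a b p).card

/-- Orientation determinant in the coordinates `a`, `b`. -/
def det (p q x : α) : ℝ := (a q - a p) * (b x - b p) - (b q - b p) * (a x - a p)

/-- The order at slot `k`: the order by `a`, with the pairs of rank less than `k` reversed. -/
noncomputable def lt (k : ℕ) (x y : α) : Prop :=
  (a x < a y ∧ k ≤ idx X a b (x, y)) ∨ (a y < a x ∧ idx X a b (y, x) < k)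

variable {X a b}

lemma mem_pairs {x y : α} : (x, y) ∈ pairs X a ↔ x ∈ X ∧ y ∈ X ∧ a x < a y := by
  simp [pairs, and_assoc]

lemma idx_lt_card {p : α × α} (hp : p ∈ pairs X a) : idx X a b p < (pairs X a).card := by
  apply Finset.card_lt_card
  rw [Finset.ssubset_iff_of_subset (Finset.filter_subset _ _)]
  exact ⟨p, hp, by simp⟩

lemma idx_lt_idx {p q : α × α} (hp : p ∈ pairs X a) (h : key a b p < key a b q) :
    idx X a b p < idx X a b q := by
  apply Finset.card_lt_card
  rw [Finset.ssubset_iff_of_subset]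
  · exact ⟨p, by simp [hp, h], by simp⟩
  · intro z hz
    simp only [Finset.mem_filter] at hz ⊢
    exact ⟨hz.1, hz.2.trans h⟩

lemma idx_le_iff {p q : α × α} (hq : q ∈ pairs X a) :
    idx X a b p ≤ idx X a b q ↔ key a b p ≤ key a b q := by
  constructor
  · intro h
    by_contra! hcon
    have := idx_lt_idx hq hcon
    omega
  · intro h
    apply Finset.card_le_card
    intro z hz
    simp only [Finset.mem_filter] at hz ⊢
    exact ⟨hz.1, hz.2.trans_le h⟩

lemma slope_mul {p : α × α} (hp : a p.1 < a p.2) :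
    slope a b p * (a p.2 - a p.1) = b p.2 - b p.1 := by
  unfold slope
  have : a p.2 - a p.1 ≠ 0 := by linarith
  field_simp

lemma det_eq {p : α × α} (hp : a p.1 < a p.2) (x : α) :
    det a b p.1 p.2 x =
      (a p.2 - a p.1) * ((b x - slope a b p * a x) - (b p.1 - slope a b p * a p.1)) := by
  unfold det
  linear_combination (a x - a p.1) * slope_mul (b := b) hp

/-- Two pairs spanning the same line coincide, by general position. -/
lemma key_inj
    (hgen : ∀ p ∈ X, ∀ q ∈ X, ∀ x ∈ X, p ≠ q → p ≠ x → q ≠ x → det a b p q x ≠ 0)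
    {p q : α × α} (hp : p ∈ pairs X a) (hq : q ∈ pairs X a)
    (h : key a b p = key a b q) : p = q := by
  obtain ⟨x, y⟩ := p
  obtain ⟨x', y'⟩ := q
  obtain ⟨hx, hy, hxy⟩ := mem_pairs.1 hp
  obtain ⟨hx', hy', hxy'⟩ := mem_pairs.1 hq
  have h0 : (slope a b (x, y), b x - slope a b (x, y) * a x) =
    (slope a b (x', y'), b x' - slope a b (x', y') * a x') := h
  obtain ⟨h1, h2⟩ := Prod.mk.inj h0
  have d := det_eq (b := b) (p := (x, y)) hxy
  have e := slope_mul (b := b) (p := (x', y')) hxy'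
  have hne : x ≠ y := by rintro rfl; exact lt_irrefl _ hxy
  simp only at d e
  have d1 : x' = x ∨ x' = y := by
    by_contra! hcon
    refine hgen x hx y hy x' hx' hne hcon.1.symm hcon.2.symm ?_
    rw [d x', h2, h1, sub_self, mul_zero]
  have d2 : y' = x ∨ y' = y := by
    by_contra! hcon
    refine hgen x hx y hy y' hy' hne hcon.1.symm hcon.2.symm ?_
    rw [d y', h2, h1]
    apply mul_eq_zero_of_right
    linarith
  rcases d1 with rfl | rfl <;> rcases d2 with rfl | rfl
  · exact absurd hxy' (lt_irrefl _)
  · rfl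
  · exact absurd hxy' (not_lt.2 hxy.le)
  · exact absurd hxy' (lt_irrefl _)

lemma idx_inj
    (hgen : ∀ p ∈ X, ∀ q ∈ X, ∀ x ∈ X, p ≠ q → p ≠ x → q ≠ x → det a b p q x ≠ 0)
    {p q : α × α} (hp : p ∈ pairs X a) (hq : q ∈ pairs X a)
    (h : idx X a b p = idx X a b q) : p = q :=
  key_inj hgen hp hq (le_antisymm ((idx_le_iff hq).1 h.le) ((idx_le_iff hp).1 h.ge))

lemma exists_idx
    (hgen : ∀ p ∈ X, ∀ q ∈ X, ∀ x ∈ X, p ≠ q → p ≠ x → q ≠ x → det a b p q x ≠ 0)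
    {k : ℕ} (hk : k < (pairs X a).card) : ∃ p ∈ pairs X a, idx X a b p = k := by
  have := Finset.surjOn_of_injOn_of_card_le (s := pairs X a) (t := Finset.range (pairs X a).card)
    (idx X a b) (fun p hp => by simpa using idx_lt_card hp)
    (fun p hp q hq h => idx_inj hgen hp hq h) (by simp)
  obtain ⟨p, hp, h⟩ := this (show k ∈ (Finset.range (pairs X a).card : Finset ℕ) by simpa using hk)
  exact ⟨p, hp, h⟩

/-- The sweep order at the event of `p`: points are compared by their intercept for the slope of `p`. Points
on a common line of that slope have been swapped already exactly if their line lies below that of `p`. -/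
noncomputable def rho (a b : α → ℝ) (p : α × α) (x : α) : ℝ ×ₗ ℝ :=
  toLex (b x - slope a b p * a x,
    if b x - slope a b p * a x < b p.1 - slope a b p * a p.1 then - a x else a x)

lemma rho_iff_aux {p : α × α} {x y : α} (hxy : a x < a y) :
    key a b p ≤ key a b (x, y) ↔ rho a b p x < rho a b p y := by
  have e := slope_mul (b := b) (p := (x, y)) hxy
  simp only at e
  simp only [key, rho, Prod.Lex.toLex_le_toLex, Prod.Lex.toLex_lt_toLex]
  set s := slope a b p
  set s' := slope a b (x, y)
  have e' : (b y - s * a y) - (b x - s * a x) = (s' - s) * (a y - a x) := by linarith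
  rcases lt_trichotomy s s' with h | h | h
  · have : 0 < (s' - s) * (a y - a x) := mul_pos (by linarith) (by linarith)
    exact ⟨fun _ => Or.inl (by linarith), fun _ => Or.inl h⟩
  · rw [← h, sub_self, zero_mul] at e'
    have e2 : b y - s * a y = b x - s * a x := by linarith
    rw [← h, e2]
    simp only [lt_irrefl, false_or, true_and]
    split_ifs with h3
    · constructor <;> intro <;> linarith
    · constructor <;> intro <;> linarith
  · have : (s' - s) * (a y - a x) < 0 := mul_neg_of_neg_of_pos (by linarith) (by linarith)
    constructor
    · rintro (h' | h')
      · linarith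
      · linarith [h'.1]
    · rintro (hlt | hlt)
      · linarith
      · linarith [hlt.1]

/-- The order at the slot of an event is the one given by `rho`; in particular it is transitive. -/
lemma lt_iff_rho (hinj : ∀ x ∈ X, ∀ y ∈ X, a x = a y → x = y)
    {p : α × α} {x y : α} (hx : x ∈ X) (hy : y ∈ X) :
    lt X a b (idx X a b p) x y ↔ rho a b p x < rho a b p y := by
  unfold lt
  rcases lt_trichotomy (a x) (a y) with h | h | h
  · rw [← rho_iff_aux h, idx_le_iff (mem_pairs.2 ⟨hx, hy, h⟩)]
    simp [h, h.le]
  · obtain rfl := hinj x hx y hy h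
    simp
  · have h1 : rho a b p x ≠ rho a b p y := by
      intro h1
      have h2 : (b x - slope a b p * a x,
        if b x - slope a b p * a x < b p.1 - slope a b p * a p.1 then - a x else a x) =
        (b y - slope a b p * a y,
        if b y - slope a b p * a y < b p.1 - slope a b p * a p.1 then - a y else a y) := h1
      obtain ⟨h3, h4⟩ := Prod.mk.inj h2
      rw [h3] at h4
      split_ifs at h4 <;> linarith
    rw [← not_le (a := rho a b p y), h1.symm.le_iff_lt, ← rho_iff_aux h, ← idx_le_iff (mem_pairs.2 ⟨hy, hx, h⟩)]
    simp [h, h.le]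

/-- The allowable sequence of a planar point set in general position. The points before a pair at the
moment of its swap are the points on one side of the line through the pair. -/
theorem exists_allowSeq [Nonempty α] (hinj : ∀ x ∈ X, ∀ y ∈ X, a x = a y → x = y)
    (hgen : ∀ p ∈ X, ∀ q ∈ X, ∀ x ∈ X, p ≠ q → p ≠ x → q ≠ x → det a b p q x ≠ 0) :
    ∃ (T : ℕ) (Z : AllowSeq X T),
    (∀ k < T, ∀ z ∈ X, Z.lt k z (Z.fst k) ↔ det a b (Z.fst k) (Z.snd k) z < 0) ∧
    (∀ i < T, ∀ j < T, Z.fst i = Z.fst j → Z.snd i = Z.snd j → i = j) := by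
  have hex : ∀ k, ∃ p : α × α, k < (pairs X a).card → p ∈ pairs X a ∧ idx X a b p = k := by
    intro k
    by_cases hk : k < (pairs X a).card
    · obtain ⟨p, hp⟩ := exists_idx hgen hk
      exact ⟨p, fun _ => hp⟩
    · exact ⟨Classical.arbitrary _, fun h => absurd h hk⟩
  choose e he using hex
  have hm : ∀ k < (pairs X a).card, (e k).1 ∈ X ∧ (e k).2 ∈ X ∧ a (e k).1 < a (e k).2 :=
    fun k hk => mem_pairs.1 (he k hk).1
  have hi : ∀ k < (pairs X a).card, idx X a b ((e k).1, (e k).2) = k := fun k hk => (he k hk).2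
  have hT : ∀ x ∈ X, ∀ y ∈ X, lt X a b (pairs X a).card x y ↔ a y < a x := by
    intro x hx y hy
    unfold lt
    constructor
    · rintro (⟨h1, h2⟩ | ⟨h1, h2⟩)
      · have := idx_lt_card (b := b) (mem_pairs.2 ⟨hx, hy, h1⟩)
        omega
      · exact h1
    · intro h
      exact Or.inr ⟨h, idx_lt_card (mem_pairs.2 ⟨hy, hx, h⟩)⟩
  let Z : AllowSeq X (pairs X a).card :=
    { lt := lt X a b
      fst := fun k => (e k).1
      snd := fun k => (e k).2
      fst_mem := fun k hk => (hm k hk).1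
      snd_mem := fun k hk => (hm k hk).2.1
      irrefl := fun k x h => by simp [lt] at h
      trans := by
        intro k hk x hx y hy z hz h1 h2
        rcases hk.eq_or_lt with rfl | hk
        · rw [hT _ hx _ hy] at h1
          rw [hT _ hy _ hz] at h2
          rw [hT _ hx _ hz]
          exact h2.trans h1
        · obtain ⟨_, hk'⟩ := he k hk
          rw [← hk', lt_iff_rho hinj hx hy] at h1
          rw [← hk', lt_iff_rho hinj hy hz] at h2
          rw [← hk', lt_iff_rho hinj hx hz]
          exact h1.trans h2
      total := by
        intro k _ x hx y hy hxy
        unfold lt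
        rcases lt_trichotomy (a x) (a y) with h | h | h
        · rcases le_or_gt k (idx X a b (x, y)) with h' | h' <;> tauto
        · exact absurd (hinj x hx y hy h) hxy
        · rcases le_or_gt k (idx X a b (y, x)) with h' | h' <;> tauto
      rev := by
        intro x hx y hy
        rw [hT x hx y hy]
        simp [lt]
      lt_pair := fun k hk => Or.inl ⟨(hm k hk).2.2, (hi k hk).ge⟩
      lt_pair_zero := fun k hk => Or.inl ⟨(hm k hk).2.2, Nat.zero_le _⟩
      lt_pair_succ := fun k hk => Or.inr ⟨(hm k hk).2.2, by rw [hi k hk]; omega⟩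
      lt_succ := by
        intro k hk x hx y hy h1 h2
        unfold lt
        have h3 : a x < a y → idx X a b (x, y) ≠ k := by
          intro h h'
          have := idx_inj hgen (mem_pairs.2 ⟨hx, hy, h⟩) (he k hk).1 (h'.trans (he k hk).2.symm)
          rw [← this] at h1
          tauto
        have h4 : a y < a x → idx X a b (y, x) ≠ k := by
          intro h h'
          have := idx_inj hgen (mem_pairs.2 ⟨hy, hx, h⟩) (he k hk).1 (h'.trans (he k hk).2.symm)
          rw [← this] at h2
          tauto
        constructor
        · rintro (⟨h, h'⟩ | ⟨h, h'⟩)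
          · exact Or.inl ⟨h, by omega⟩
          · exact Or.inr ⟨h, by have := h4 h; omega⟩
        · rintro (⟨h, h'⟩ | ⟨h, h'⟩)
          · exact Or.inl ⟨h, by have := h3 h; omega⟩
          · exact Or.inr ⟨h, by omega⟩ }
  refine ⟨_, Z, ?_, ?_⟩
  · intro k hk z hz
    have hk' := (he k hk).2
    obtain ⟨h1, h2, h3⟩ := hm k hk
    change lt X a b k z (e k).1 ↔ det a b (e k).1 (e k).2 z < 0
    rw [det_eq h3, mul_neg_iff]
    have hpos : 0 < a (e k).2 - a (e k).1 := by linarith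
    simp only [hpos, not_lt.2 hpos.le, true_and, false_and, or_false, sub_neg]
    have h4 := lt_iff_rho (b := b) (p := e k) hinj hz h1
    rw [hk'] at h4
    rw [h4]
    simp only [rho, Prod.Lex.toLex_lt_toLex, lt_irrefl, if_false]
    refine ⟨?_, Or.inl⟩
    rintro (h | ⟨h, h'⟩)
    · exact h
    · rw [h, if_neg (lt_irrefl _)] at h'
      exfalso
      -- a third point on the line of the event is excluded by general position
      have hz1 : (e k).1 ≠ z := by intro h''; rw [h''] at h'; exact lt_irrefl _ h'
      have hz2 : (e k).2 ≠ z := by intro h''; rw [h''] at h3; linarith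
      have h12 : (e k).1 ≠ (e k).2 := by intro h''; rw [h''] at h3; exact lt_irrefl _ h3
      refine hgen _ h1 _ h2 z hz h12 hz1 hz2 ?_
      rw [det_eq h3, h, sub_self, mul_zero]
  · intro i hi' j hj h1 h2
    rw [← (he i hi').2, ← (he j hj).2]
    congr 1
    exact Prod.ext h1 h2

end Sweep

/-! ### Balanced lines as flips -/

/-- A sheared first coordinate that separates the points. -/
lemma exists_shear (X : Finset (ℝ × ℝ)) :
    ∃ m : ℝ, ∀ x ∈ X, ∀ y ∈ X, x.1 + m * x.2 = y.1 + m * y.2 → x = y := by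
  obtain ⟨m, hm⟩ := Infinite.exists_notMem_finset
    ((X ×ˢ X).image fun p => (p.2.1 - p.1.1) / (p.1.2 - p.2.2))
  refine ⟨m, fun x hx y hy h => ?_⟩
  by_contra hxy
  by_cases h2 : x.2 = y.2
  · apply hxy
    rw [h2] at h
    exact Prod.ext (by linarith) h2
  · apply hm
    rw [Finset.mem_image]
    refine ⟨(x, y), Finset.mem_product.2 ⟨hx, hy⟩, ?_⟩
    have : x.2 - y.2 ≠ 0 := sub_ne_zero.2 h2
    simp only
    field_simp
    linarith

lemma card_sub_card {R B : Finset (ℝ × ℝ)} (hdisj : Disjoint R B) (P : ℝ × ℝ → Prop) :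
    ((B.filter P).card : ℤ) - ((R.filter P).card : ℤ) =
      ∑ x ∈ R ∪ B, if P x then PosSeq.wt (fun x => decide (x ∈ B)) x else 0 := by
  rw [Finset.sum_union hdisj, Finset.card_filter, Finset.card_filter]
  push_cast
  rw [sub_eq_neg_add, ← Finset.sum_neg_distrib]
  congr 1
  · apply Finset.sum_congr rfl
    intro x hx
    have : x ∉ B := Finset.disjoint_left.1 hdisj hx
    by_cases h : P x <;> simp [PosSeq.wt, this, h]
  · apply Finset.sum_congr rfl
    intro x hx
    by_cases h : P x <;> simp [PosSeq.wt, hx, h]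

lemma cross_swap (p q x : ℝ × ℝ) : cross q p x = - cross p q x := by
  unfold cross; ring

lemma balancedLine_swap {B R : Finset (ℝ × ℝ)} {δ : ℤ} {p q : ℝ × ℝ}
    (h : BalancedLine B R δ p q) : BalancedLine B R δ q p := by
  unfold BalancedLine wPos wNeg at *
  simp only [cross_swap p q, Left.neg_pos_iff, Left.neg_neg_iff]
  exact ⟨h.2, h.1⟩

/-- The total weight is `2δ` and the two points on the line cancel, so weight `δ` on one side forces weight
`δ` on the other. -/
lemma balancedLine_of_wNeg {R B : Finset (ℝ × ℝ)} (hdisj : Disjoint R B)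
    (hgp : GenPos (R ∪ B)) {δ : ℤ}
    (hδ : ∑ x ∈ R ∪ B, PosSeq.wt (fun x => decide (x ∈ B)) x = 2 * δ) {p q : ℝ × ℝ}
    (hp : p ∈ R ∪ B) (hq : q ∈ R ∪ B) (hcol : decide (p ∈ B) ≠ decide (q ∈ B))
    (h : wNeg B R p q = δ) : BalancedLine B R δ p q := by
  refine ⟨?_, h⟩
  have hpq : p ≠ q := by rintro rfl; exact hcol rfl
  unfold wNeg at h
  unfold wPos
  rw [card_sub_card hdisj] at h ⊢
  set w := PosSeq.wt (fun x => decide (x ∈ B)) with hw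
  have h0 : w p + w q = 0 := by
    rw [hw]
    unfold PosSeq.wt
    by_cases h1 : p ∈ B <;> by_cases h2 : q ∈ B <;> simp [h1, h2] at hcol ⊢
  have h1 : ∑ x ∈ R ∪ B, w x - (∑ x ∈ R ∪ B, if 0 < cross p q x then w x else 0) -
      (∑ x ∈ R ∪ B, if cross p q x < 0 then w x else 0) = ∑ x ∈ ({p, q} : Finset (ℝ × ℝ)), w x := by
    rw [← Finset.sum_sub_distrib, ← Finset.sum_sub_distrib]
    symm
    have hsub : ({p, q} : Finset (ℝ × ℝ)) ⊆ R ∪ B := by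
      intro x hx
      simp only [Finset.mem_insert, Finset.mem_singleton] at hx
      rcases hx with rfl | rfl <;> assumption
    rw [← Finset.sum_subset hsub (f := fun x => w x - (if 0 < cross p q x then w x else 0) -
      if cross p q x < 0 then w x else 0)]
    · apply Finset.sum_congr rfl
      intro x hx
      have : cross p q x = 0 := by
        simp only [Finset.mem_insert, Finset.mem_singleton] at hx
        rcases hx with rfl | rfl <;> unfold cross <;> ring
      simp [this]
    · intro x hx hx'
      simp only [Finset.mem_insert, Finset.mem_singleton, not_or] at hx'
      rcases lt_or_gt_of_ne (hgp p hp q hq x hx hpq (Ne.symm hx'.1) (Ne.symm hx'.2)) with h | h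
      · simp [h, h.le]
      · simp [h, h.le]
  rw [Finset.sum_pair hpq] at h1
  omega

/-- `S = R ∪ B` determines at least `min |R| |B| = r` balanced lines: there
are at least `r` distinct pairs `(p, q)` with `p ∈ B`, `q ∈ R` such that the
line through `p` and `q` is balanced. -/
theorem at_least_min_balanced_pairs (r δ : ℕ)
    (R B : Finset (ℝ × ℝ)) (hdisj : Disjoint R B)
    (hR : R.card = r) (hB : B.card = r + 2 * δ)
    (hgp : GenPos (R ∪ B)) :
    min R.card B.card = r ∧ r ≤ (balancedPairs B R (δ : ℤ)).card := by
  refine ⟨by omega, ?_⟩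
  set X := R ∪ B with hX
  set col : ℝ × ℝ → Bool := fun x => decide (x ∈ B) with hcol
  obtain ⟨m, hm⟩ := exists_shear X
  have hdet : ∀ p q x : ℝ × ℝ,
      Sweep.det (fun x => x.1 + m * x.2) (fun x => x.2) p q x = cross p q x := by
    intro p q x
    unfold Sweep.det cross
    ring
  obtain ⟨T, Z, hZ, hZ'⟩ := Sweep.exists_allowSeq (X := X) (a := fun x => x.1 + m * x.2)
    (b := fun x => x.2) hm (by simp only [hdet]; exact hgp)
  simp only [hdet] at hZ
  have hRc : ∑ x ∈ X, PosSeq.ind col false x = r := by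
    rw [hX, Finset.sum_union hdisj, Finset.sum_eq_card_nsmul (s := R) (b := 1),
      Finset.sum_eq_zero (s := B), hR]
    · simp
    · intro x hx
      simp [PosSeq.ind, hcol, hx]
    · intro x hx
      simp [PosSeq.ind, hcol, Finset.disjoint_left.1 hdisj hx]
  have hBc : ∑ x ∈ X, PosSeq.ind col true x = r + 2 * δ := by
    rw [hX, Finset.sum_union hdisj, Finset.sum_eq_card_nsmul (s := B) (b := 1),
      Finset.sum_eq_zero (s := R), hB]
    · simp
    · intro x hx
      simp [PosSeq.ind, hcol, Finset.disjoint_left.1 hdisj hx]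
    · intro x hx
      simp [PosSeq.ind, hcol, hx]
  have hδ : ∑ x ∈ X, PosSeq.wt col x = 2 * (δ : ℤ) := by
    have : ∀ x, PosSeq.wt col x = PosSeq.ind col true x - PosSeq.ind col false x := by
      intro x
      unfold PosSeq.wt PosSeq.ind
      cases col x <;> simp
    simp only [this, Finset.sum_sub_distrib, hRc, hBc]
    ring
  refine (Z.toPos.flips_ge col δ hδ r hRc.ge (by rw [hBc]; omega)).trans ?_
  have hbal : ∀ k < T, Z.toPos.fl col δ k → BalancedLine B R δ (Z.fst k) (Z.snd k) := by
    intro k hk hfl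
    obtain ⟨h1, h2⟩ := hfl
    refine balancedLine_of_wNeg hdisj hgp hδ (Z.fst_mem k hk) (Z.snd_mem k hk) h1 ?_
    rw [Z.h_ev col hk] at h2
    unfold wNeg
    rw [card_sub_card hdisj, ← h2]
    refine Finset.sum_congr rfl fun x hx => ?_
    simp only [hZ k hk x hx]
    rfl
  have hmem : ∀ x ∈ X, x ∉ B → x ∈ R := by
    intro x hx hx'
    rw [hX, Finset.mem_union] at hx
    tauto
  refine Finset.card_le_card_of_injOn
    (fun k => if Z.fst k ∈ B then (Z.fst k, Z.snd k) else (Z.snd k, Z.fst k)) ?_ ?_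
  · intro k hk
    simp only [Finset.coe_filter, Finset.mem_range, Set.mem_ofPred_eq] at hk
    obtain ⟨hk, hfl⟩ := hk
    have hb := hbal k hk hfl
    have hc : decide (Z.fst k ∈ B) ≠ decide (Z.snd k ∈ B) := hfl.1
    have hne : ¬ (Z.fst k ∈ B ↔ Z.snd k ∈ B) := by simpa using hc
    have h1 := hmem _ (Z.fst_mem k hk)
    have h2 := hmem _ (Z.snd_mem k hk)
    simp only [balancedPairs, Finset.coe_filter, Set.mem_ofPred_eq]
    split_ifs with h
    · exact ⟨Finset.mem_product.2 ⟨h, h2 (by tauto)⟩, hb⟩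
    · exact ⟨Finset.mem_product.2 ⟨by tauto, h1 h⟩, balancedLine_swap hb⟩
  · intro i hi j hj hij
    simp only [Finset.coe_filter, Finset.mem_range, Set.mem_ofPred_eq] at hi hj
    have hi' := Z.lt_pair_zero i hi.1
    have hj' := Z.lt_pair_zero j hj.1
    -- two events on the same pair of points list it in the same, initial, order
    have hcross : Z.fst i = Z.snd j → Z.snd i = Z.fst j → False := by
      intro h1 h2
      rw [h1, h2] at hi'
      exact Z.asymm (Nat.zero_le T) (Z.fst_mem j hj.1) (Z.snd_mem j hj.1) hj' hi'
    simp only at hij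
    split_ifs at hij with h1 h2 h2
    · exact hZ' i hi.1 j hj.1 (Prod.mk.inj hij).1 (Prod.mk.inj hij).2
    · exact (hcross (Prod.mk.inj hij).1 (Prod.mk.inj hij).2).elim
    · exact (hcross (Prod.mk.inj hij).2 (Prod.mk.inj hij).1).elim
    · exact hZ' i hi.1 j hj.1 (Prod.mk.inj hij).2 (Prod.mk.inj hij).1
end
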